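/- Let n ≥ 2 and let A, B ⊆ ℝⁿ be Borel sets with dimH A > n−1 and dimH B > n−1. Then the set of unit vectors e ∈ S^{n−1} for which the intersection P_e(A) ∩ P_e(B) has positive (n−1)-dimensional Hausdorff measure has positive (n−1)-dimensional Hausdorff measure in S^{n−1}. -/

import Mathlib

open MeasureTheory Metric Set
open scoped ENNReal RealInnerProductSpace

/-!
In linear coordinates `ℝ × V` on the ambient space, `V` of dimension `n - 1`, almost every
hyperplane projection becomes a slanted projection `slant v (s, y) = y - s • v` with `v : V`.

Frostman's lemma, obtained here for analytic sets from Choquet's capacitability theorem on the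
space of dyadic codes, puts probability measures `μ` and `ν` on compact subsets of `A` and `B`
with bounded Riesz potentials of order `n - 1`. Let `f_δ (v, z)` and `g_δ (v, z)` be the densities
at `z` of the images of `μ` and `ν` under `slant v`, averaged over balls of radius `δ`. The
integral of `f_δ * g_ε` over `v` and `z` is the `μ.prod ν`-integral of a function of `x - y` which
is bounded by a multiple of the Riesz kernel `‖x - y‖ ^ (1 - n)` and has an explicit limit as
`δ, ε → 0`. Applied to the pairs `(μ, μ)` and `(ν, ν)`, this shows that `f_δ` and `g_δ` are
Cauchy in `L²`. Applied to `(μ, ν)`, it shows that the integral of `f_δ * g_δ` has a positive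
limit. So the supports of the products `f_δ * g_δ`, which decrease to the set of pairs `(v, z)`
with `z` in both projections, cannot have measure tending to zero, and that set has positive
measure.
-/

section Choquet

/-- A Choquet capacity: a monotone set function which is continuous along increasing sequences of
arbitrary sets and outer regular on compact sets. Continuity along decreasing sequences of compact
sets, the more common axiom, follows from outer regularity. -/
structure IsChoquetCapacity {α : Type*} [TopologicalSpace α] (γ : Set α → ℝ≥0∞) : Prop where
  mono : Monotone γ
  iUnion_le : ∀ E : ℕ → Set α, Monotone E → γ (⋃ k, E k) ≤ ⨆ k, γ (E k)
  exists_isOpen_lt : ∀ K, IsCompact K → ∀ c, γ K < c → ∃ U, IsOpen U ∧ K ⊆ U ∧ γ U < c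

theorem isCompact_Iic_nat_pi (b : ℕ → ℕ) : IsCompact (Iic b) := by
  rw [← Icc_bot]
  exact isCompact_Icc

theorem exists_forall_lt_le_subset_of_Iic_subset {b : ℕ → ℕ} {U : Set (ℕ → ℕ)} (hU : IsOpen U)
    (hb : Iic b ⊆ U) : ∃ k, {x : ℕ → ℕ | ∀ i < k, x i ≤ b i} ⊆ U := by
  by_contra! hcon
  choose x hx hxU using fun k => not_subset.1 (hcon k)
  obtain ⟨y, hy, φ, hφ, hlim⟩ := (isCompact_Iic_nat_pi b).tendsto_subseq
    (x := fun k => x k ⊓ b) (fun k => mem_Iic.2 inf_le_right)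
  have hlim' : Filter.Tendsto (x ∘ φ) Filter.atTop (nhds y) := by
    rw [tendsto_pi_nhds] at hlim ⊢
    intro i
    refine (hlim i).congr' ?_
    filter_upwards [Filter.eventually_gt_atTop i] with k hk
    exact min_eq_left (hx (φ k) i (hk.trans_le hφ.le_apply))
  obtain ⟨k, hk⟩ := (hlim'.eventually (hU.mem_nhds (hb hy))).exists
  exact hxU _ hk

namespace IsChoquetCapacity

variable {α : Type*} [TopologicalSpace α] {γ : Set α → ℝ≥0∞} {f : (ℕ → ℕ) → α} {c : ℝ≥0∞}

theorem exists_lt_image_inter_le (hγ : IsChoquetCapacity γ) {S : Set (ℕ → ℕ)} (k : ℕ)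
    (h : c < γ (f '' S)) : ∃ j, c < γ (f '' (S ∩ {x | x k ≤ j})) := by
  have hS : f '' S = ⋃ j, f '' (S ∩ {x | x k ≤ j}) := by
    rw [← image_iUnion, ← inter_iUnion, iUnion_eq_univ_iff.2 fun x => ⟨x k, by simp⟩, inter_univ]
  have hmono : Monotone fun j => f '' (S ∩ {x | x k ≤ j}) := fun i j hij =>
    image_mono (inter_subset_inter_right S fun x hx => le_trans hx hij)
  exact lt_iSup_iff.1 (h.trans_le (hS ▸ hγ.iUnion_le _ hmono))

theorem exists_forall_lt_image (hγ : IsChoquetCapacity γ) (h : c < γ (range f)) :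
    ∃ b : ℕ → ℕ, ∀ k, c < γ (f '' {x | ∀ i < k, x i ≤ b i}) := by
  choose! j hj using fun k S => hγ.exists_lt_image_inter_le (f := f) (c := c) (S := S) k
  let S : ℕ → Set (ℕ → ℕ) := fun k => Nat.rec univ (fun k T => T ∩ {x | x k ≤ j k T}) k
  have hS : ∀ k, c < γ (f '' S k) := fun k => by
    induction k with
    | zero => exact image_univ ▸ h
    | succ k ih => exact hj k _ ih
  refine ⟨fun i => j i (S i), fun k => ?_⟩
  suffices {x : ℕ → ℕ | ∀ i < k, x i ≤ j i (S i)} = S k from this ▸ hS k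
  induction k with
  | zero => simp [S]
  | succ k ih =>
    have hsucc : S (k + 1) = S k ∩ {x | x k ≤ j k (S k)} := rfl
    ext x
    rw [hsucc, mem_inter_iff, ← Set.ext_iff.1 ih x]
    exact Nat.forall_lt_succ_right

/-- **Choquet's capacitability theorem.** -/
theorem exists_isCompact_le (hγ : IsChoquetCapacity γ) {E : Set α} (hE : AnalyticSet E)
    (h : c < γ E) : ∃ K ⊆ E, IsCompact K ∧ c ≤ γ K := by
  rw [AnalyticSet] at hE
  rcases hE with rfl | ⟨f, hf, rfl⟩
  · exact ⟨∅, Subset.rfl, isCompact_empty, h.le⟩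
  obtain ⟨b, hb⟩ := hγ.exists_forall_lt_image h
  have hK : IsCompact (f '' Iic b) := (isCompact_Iic_nat_pi b).image hf
  refine ⟨f '' Iic b, image_subset_range _ _, hK, le_of_not_gt fun hlt => ?_⟩
  obtain ⟨U, hU, hKU, hUc⟩ := hγ.exists_isOpen_lt _ hK c hlt
  obtain ⟨k, hk⟩ :=
    exists_forall_lt_le_subset_of_Iic_subset (hU.preimage hf) (image_subset_iff.1 hKU)
  exact ((hb k).trans_le (hγ.mono (image_subset_iff.2 hk))).not_gt hUc

end IsChoquetCapacity

end Choquet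

section NetContent

variable {X : Type*} {𝓒 : Set (Set X)} {w : Set X → ℝ≥0∞}

/-- The net content of a set `E`: the infimum of the total weights `∑ w C` of the subfamilies of
`𝓒` covering `E`. -/
noncomputable def netContent (𝓒 : Set (Set X)) (w : Set X → ℝ≥0∞) : OuterMeasure X where
  measureOf E := ⨅ T ∈ {T | T ⊆ 𝓒 ∧ E ⊆ ⋃₀ T}, ∑' C : T, w C
  empty := le_zero_iff.1 <| (iInf₂_le ∅ ⟨empty_subset _, empty_subset _⟩).trans_eq tsum_empty
  mono hEF := biInf_mono fun _ hT => ⟨hT.1, hEF.trans hT.2⟩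
  iUnion_nat E _ := by
    refine ENNReal.le_of_forall_pos_le_add fun ε hε hfin => ?_
    obtain ⟨δ, hδ, hδε⟩ := ENNReal.exists_pos_sum_of_countable (ENNReal.coe_pos.2 hε).ne' ℕ
    have hlt := fun i => ENNReal.lt_add_right (ENNReal.ne_top_of_tsum_ne_top hfin.ne i)
      (ENNReal.coe_pos.2 (hδ i)).ne'
    simp only [iInf_lt_iff] at hlt
    choose T hT hTw using hlt
    have hcover : ⋃ i, E i ⊆ ⋃₀ ⋃ i, T i := by
      rw [sUnion_iUnion]
      exact iUnion_mono fun i => (hT i).2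
    calc ⨅ T ∈ {T | T ⊆ 𝓒 ∧ ⋃ i, E i ⊆ ⋃₀ T}, ∑' C : T, w C
        ≤ ∑' C : ⋃ i, T i, w C := iInf₂_le _ ⟨iUnion_subset fun i => (hT i).1, hcover⟩
      _ ≤ ∑' i, ∑' C : T i, w C := ENNReal.tsum_iUnion_le_tsum w T
      _ ≤ ∑' i, ((⨅ T ∈ {T | T ⊆ 𝓒 ∧ E i ⊆ ⋃₀ T}, ∑' C : T, w C) + δ i) :=
        ENNReal.tsum_le_tsum fun i => (hTw i).le
      _ ≤ _ := by rw [ENNReal.tsum_add]; gcongr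

theorem netContent_le_tsum {T : Set (Set X)} {E : Set X} (hT : T ⊆ 𝓒) (hE : E ⊆ ⋃₀ T) :
    netContent 𝓒 w E ≤ ∑' C : T, w C :=
  iInf₂_le T ⟨hT, hE⟩

theorem netContent_le {C : Set X} (hC : C ∈ 𝓒) : netContent 𝓒 w C ≤ w C :=
  (netContent_le_tsum (singleton_subset_iff.2 hC) (sUnion_singleton C).ge).trans_eq
    (tsum_singleton C w)

theorem exists_cover_of_netContent_lt {E : Set X} {c : ℝ≥0∞} (h : netContent 𝓒 w E < c) :
    ∃ T ⊆ 𝓒, E ⊆ ⋃₀ T ∧ ∑' C : T, w C < c := by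
  change ⨅ T ∈ {T | T ⊆ 𝓒 ∧ E ⊆ ⋃₀ T}, ∑' C : T, w C < c at h
  simp only [iInf_lt_iff] at h
  obtain ⟨T, ⟨hT𝓒, hET⟩, hTc⟩ := h
  exact ⟨T, hT𝓒, hET, hTc⟩

theorem exists_isOpen_netContent_lt [TopologicalSpace X] (h𝓒 : ∀ C ∈ 𝓒, IsOpen C) {E : Set X}
    {c : ℝ≥0∞} (h : netContent 𝓒 w E < c) : ∃ U, IsOpen U ∧ E ⊆ U ∧ netContent 𝓒 w U < c := by
  obtain ⟨T, hT𝓒, hET, hTc⟩ := exists_cover_of_netContent_lt h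
  exact ⟨⋃₀ T, isOpen_sUnion fun C hC => h𝓒 C (hT𝓒 hC), hET,
    (netContent_le_tsum hT𝓒 Subset.rfl).trans_lt hTc⟩

/-- A family of sets, any two of which are nested or disjoint, in which every member has only
finitely many larger members; the model is the family of dyadic cubes of side at most one. -/
structure IsNet (𝓒 : Set (Set X)) : Prop where
  nested_or_disjoint : ∀ C ∈ 𝓒, ∀ D ∈ 𝓒, C ⊆ D ∨ D ⊆ C ∨ Disjoint C D
  finite_supersets : ∀ C ∈ 𝓒, {D ∈ 𝓒 | C ⊆ D}.Finite

/-- The members of a family of sets that are maximal for inclusion. -/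
def maximalMembers (T : Set (Set X)) : Set (Set X) := {C | Maximal (· ∈ T) C}

theorem maximalMembers_subset (T : Set (Set X)) : maximalMembers T ⊆ T := fun _ hC => hC.prop

theorem IsNet.sUnion_subset_sUnion_maximalMembers (h𝓒 : IsNet 𝓒) {T : Set (Set X)} (hT : T ⊆ 𝓒) :
    ⋃₀ T ⊆ ⋃₀ maximalMembers T := by
  rintro x ⟨C, hC, hxC⟩
  have hfin : {D ∈ T | C ⊆ D}.Finite :=
    (h𝓒.finite_supersets C (hT hC)).subset fun D hD => ⟨hT hD.1, hD.2⟩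
  obtain ⟨M, hCM, hM⟩ := hfin.exists_le_maximal (show C ∈ {D ∈ T | C ⊆ D} from ⟨hC, Subset.rfl⟩)
  exact ⟨M, ⟨hM.prop.1, fun D hD hMD => hM.2 ⟨hD, hCM.trans hMD⟩ hMD⟩, hCM hxC⟩

theorem tsum_add_tsum_le_of_subset_union {ι : Type*} {M P R : Set ι} (h : M ⊆ P ∪ R)
    (w : ι → ℝ≥0∞) :
    ∑' i : M, w i + ∑' i : ↑(P ∩ R ∪ (P ∪ R) \ M), w i ≤ ∑' i : P, w i + ∑' i : R, w i := by
  classical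
  simp only [tsum_subtype, ← ENNReal.tsum_add]
  refine ENNReal.tsum_le_tsum fun i => ?_
  have hi := @h i
  by_cases hM : i ∈ M <;> by_cases hP : i ∈ P <;> by_cases hR : i ∈ R <;>
    simp_all

/-- Strong subadditivity: the non-maximal members of `T ∪ S`, together with the common ones, still
cover `E ∩ F`. -/
theorem IsNet.tsum_maximalMembers_union_add_netContent_inter_le (h𝓒 : IsNet 𝓒)
    {T S : Set (Set X)} (hT : T ⊆ 𝓒) (hS : S ⊆ 𝓒) {E F : Set X} (hE : E ⊆ ⋃₀ T) (hF : F ⊆ ⋃₀ S) :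
    ∑' C : maximalMembers (T ∪ S), w C + netContent 𝓒 w (E ∩ F) ≤
      ∑' C : maximalMembers T, w C + ∑' C : S, w C := by
  set P := maximalMembers T
  set R := maximalMembers S
  set M := maximalMembers (T ∪ S)
  have hP : P ⊆ T := maximalMembers_subset T
  have hR : R ⊆ S := maximalMembers_subset S
  have hM : M ⊆ P ∪ R := fun C hC => hC.prop.imp
    (fun h => ⟨h, fun D hD => hC.2 (Or.inl hD)⟩) (fun h => ⟨h, fun D hD => hC.2 (Or.inr hD)⟩)
  have hcover : E ∩ F ⊆ ⋃₀ (P ∩ R ∪ (P ∪ R) \ M) := by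
    rintro x ⟨hxE, hxF⟩
    obtain ⟨C, hC, hxC⟩ := h𝓒.sUnion_subset_sUnion_maximalMembers hT (hE hxE)
    obtain ⟨D, hD, hxD⟩ := h𝓒.sUnion_subset_sUnion_maximalMembers hS (hF hxF)
    rcases eq_or_ne C D with rfl | hCD
    · exact ⟨C, Or.inl ⟨hC, hD⟩, hxC⟩
    rcases h𝓒.nested_or_disjoint C (hT (hP hC)) D (hS (hR hD)) with h | h | h
    · exact ⟨C, Or.inr ⟨Or.inl hC, fun hCM => hCD (h.antisymm (hCM.2 (Or.inr (hR hD)) h))⟩, hxC⟩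
    · exact ⟨D, Or.inr ⟨Or.inr hD, fun hDM => hCD ((hDM.2 (Or.inl (hP hC)) h).antisymm h)⟩, hxD⟩
    · exact absurd hxD (disjoint_left.1 h hxC)
  have hsub : P ∩ R ∪ (P ∪ R) \ M ⊆ 𝓒 :=
    union_subset (fun C hC => hT (hP hC.1))
      (sdiff_subset.trans (union_subset (hP.trans hT) (hR.trans hS)))
  calc ∑' C : M, w C + netContent 𝓒 w (E ∩ F)
      ≤ ∑' C : M, w C + ∑' C : ↑(P ∩ R ∪ (P ∪ R) \ M), w C := by
        gcongr; exact netContent_le_tsum hsub hcover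
    _ ≤ ∑' C : P, w C + ∑' C : R, w C := tsum_add_tsum_le_of_subset_union hM w
    _ ≤ ∑' C : P, w C + ∑' C : S, w C := by gcongr; exact ENNReal.tsum_mono_subtype w hR

theorem tsum_maximalMembers_iUnion_le {T : ℕ → Set (Set X)} (hT : Monotone T) :
    ∑' C : maximalMembers (⋃ k, T k), w C ≤ ⨆ k, ∑' C : maximalMembers (T k), w C := by
  classical
  simp only [tsum_subtype]
  rw [ENNReal.tsum_eq_iSup_sum]
  refine iSup_le fun s => ?_
  obtain ⟨k, hk⟩ := hT.directed_le.exists_mem_subset_of_finset_subset_biUnion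
    (s := {C ∈ s | C ∈ maximalMembers (⋃ k, T k)})
    (fun C hC => maximalMembers_subset _ (Finset.mem_filter.1 hC).2)
  have hmax : ∀ C ∈ s, C ∈ maximalMembers (⋃ k, T k) → C ∈ maximalMembers (T k) := fun C hCs hC =>
    ⟨hk (Finset.mem_coe.2 (Finset.mem_filter.2 ⟨hCs, hC⟩)),
      fun D hD => hC.2 (mem_iUnion_of_mem k hD)⟩
  calc ∑ C ∈ s, (maximalMembers (⋃ k, T k)).indicator w C
      ≤ ∑ C ∈ s, (maximalMembers (T k)).indicator w C := Finset.sum_le_sum fun C hCs =>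
        indicator_apply_le fun hC => (indicator_of_mem (hmax C hCs hC) w).ge
    _ ≤ ∑' C, (maximalMembers (T k)).indicator w C := ENNReal.sum_le_tsum s
    _ ≤ ⨆ k, ∑' C, (maximalMembers (T k)).indicator w C :=
      le_iSup (fun k => ∑' C, (maximalMembers (T k)).indicator w C) k

theorem IsNet.tsum_maximalMembers_accumulate_le (h𝓒 : IsNet 𝓒) {T : ℕ → Set (Set X)}
    (hT : ∀ k, T k ⊆ 𝓒) {E : ℕ → Set X} (hE : Monotone E) (hET : ∀ k, E k ⊆ ⋃₀ T k)
    (hfin : ∀ k, netContent 𝓒 w (E k) ≠ ∞) {δ : ℕ → ℝ≥0∞}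
    (hw : ∀ k, ∑' C : T k, w C ≤ netContent 𝓒 w (E k) + δ k) (k : ℕ) :
    ∑' C : maximalMembers (accumulate T k), w C ≤
      netContent 𝓒 w (E k) + ∑ i ∈ Finset.range (k + 1), δ i := by
  induction k with
  | zero =>
    rw [Finset.sum_range_one, accumulate_zero_nat]
    exact (ENNReal.tsum_mono_subtype w (maximalMembers_subset _)).trans (hw 0)
  | succ k ih =>
    have hcover : E k ⊆ ⋃₀ accumulate T k :=
      (hET k).trans (sUnion_mono (subset_accumulate (s := T) (x := k)))
    have hsub : accumulate T k ⊆ 𝓒 := iUnion₂_subset fun i _ => hT i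
    have hstep := h𝓒.tsum_maximalMembers_union_add_netContent_inter_le (w := w)
      hsub (hT (k + 1)) hcover (hET (k + 1))
    rw [inter_eq_left.2 (hE k.le_succ), ← accumulate_succ] at hstep
    refine (ENNReal.add_le_add_iff_right (hfin k)).1 (hstep.trans ?_)
    calc ∑' C : maximalMembers (accumulate T k), w C + ∑' C : T (k + 1), w C
        ≤ (netContent 𝓒 w (E k) + ∑ i ∈ Finset.range (k + 1), δ i) +
          (netContent 𝓒 w (E (k + 1)) + δ (k + 1)) := add_le_add ih (hw (k + 1))
      _ = _ := by rw [Finset.sum_range_succ _ (k + 1)]; ring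

theorem IsNet.netContent_iUnion_le (h𝓒 : IsNet 𝓒) {E : ℕ → Set X} (hE : Monotone E) :
    netContent 𝓒 w (⋃ k, E k) ≤ ⨆ k, netContent 𝓒 w (E k) := by
  refine ENNReal.le_of_forall_pos_le_add fun ε hε hsup => ?_
  obtain ⟨δ, hδ, hδε⟩ := ENNReal.exists_pos_sum_of_countable (ENNReal.coe_pos.2 hε).ne' ℕ
  have hfin : ∀ k, netContent 𝓒 w (E k) ≠ ∞ := fun k =>
    ((le_iSup (fun k => netContent 𝓒 w (E k)) k).trans_lt hsup).ne
  choose T hT hET hTw using fun k => exists_cover_of_netContent_lt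
    (ENNReal.lt_add_right (hfin k) (ENNReal.coe_pos.2 (hδ k)).ne')
  have hcover : ⋃ k, E k ⊆ ⋃₀ maximalMembers (⋃ k, accumulate T k) := by
    refine Subset.trans ?_ (h𝓒.sUnion_subset_sUnion_maximalMembers
      (iUnion_subset fun k => iUnion₂_subset fun i _ => hT i))
    rw [iUnion_accumulate, sUnion_iUnion]
    exact iUnion_mono hET
  calc netContent 𝓒 w (⋃ k, E k)
      ≤ ∑' C : maximalMembers (⋃ k, accumulate T k), w C :=
        netContent_le_tsum ((maximalMembers_subset _).trans
          (iUnion_subset fun k => iUnion₂_subset fun i _ => hT i)) hcover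
    _ ≤ ⨆ k, ∑' C : maximalMembers (accumulate T k), w C :=
        tsum_maximalMembers_iUnion_le monotone_accumulate
    _ ≤ (⨆ k, netContent 𝓒 w (E k)) + ε := iSup_le fun k =>
        (h𝓒.tsum_maximalMembers_accumulate_le hT hE hET hfin (fun k => (hTw k).le) k).trans <|
          add_le_add (le_iSup (fun k => netContent 𝓒 w (E k)) k)
            ((ENNReal.sum_le_tsum _).trans hδε.le)

/-- A consequence of strong subadditivity (Davies). -/
theorem IsNet.isChoquetCapacity_netContent [TopologicalSpace X] (h𝓒 : IsNet 𝓒)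
    (hopen : ∀ C ∈ 𝓒, IsOpen C) : IsChoquetCapacity (netContent 𝓒 w) where
  mono _ _ h := measure_mono h
  iUnion_le _ hE := h𝓒.netContent_iUnion_le hE
  exists_isOpen_lt _ _ _ := exists_isOpen_netContent_lt hopen

end NetContent

section SequenceSpace

variable {D : Type*}

theorem cylinder_succ (x : ℕ → D) (k : ℕ) :
    PiNat.cylinder x (k + 1) = PiNat.cylinder x k ∩ {y | y k = x k} := by
  ext y
  simp only [PiNat.mem_cylinder_iff, Nat.forall_lt_succ_right, mem_inter_iff, mem_ofPred_eq]

theorem cylinder_succ_eq_preimage_frestrictLe (x : ℕ → D) (k : ℕ) :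
    PiNat.cylinder x (k + 1) =
      Preorder.frestrictLe (π := fun _ => D) k ⁻¹' {Preorder.frestrictLe k x} := by
  ext y
  simp only [PiNat.mem_cylinder_iff, mem_preimage, mem_singleton_iff, funext_iff,
    Preorder.frestrictLe_apply, Subtype.forall, Finset.mem_Iic, Nat.lt_succ_iff]

/-- The cylinders of the sequence space `ℕ → D`. -/
def cylinders (D : Type*) : Set (Set (ℕ → D)) := {C | ∃ x k, C = PiNat.cylinder x k}

theorem isNet_cylinders : IsNet (cylinders D) where
  nested_or_disjoint := by
    rintro _ ⟨x, k, rfl⟩ _ ⟨y, l, rfl⟩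
    by_cases h : Disjoint (PiNat.cylinder x k) (PiNat.cylinder y l)
    · exact Or.inr (Or.inr h)
    obtain ⟨z, hzx, hzy⟩ := not_disjoint_iff.1 h
    rw [← PiNat.mem_cylinder_iff_eq.1 hzx, ← PiNat.mem_cylinder_iff_eq.1 hzy]
    exact (le_total l k).imp (PiNat.cylinder_anti z) fun h => Or.inl (PiNat.cylinder_anti z h)
  finite_supersets := by
    rintro _ ⟨x, k, rfl⟩
    refine ((finite_Iic k).image (PiNat.cylinder x)).subset ?_
    rintro _ ⟨⟨y, l, rfl⟩, hle⟩
    have hxy := PiNat.mem_cylinder_iff_eq.1 (hle (PiNat.self_mem_cylinder x k))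
    rw [← hxy] at hle
    rw [← hxy]
    rcases le_total l k with hlk | hkl
    · exact ⟨l, hlk, rfl⟩
    · exact ⟨k, self_mem_Iic, hle.antisymm (PiNat.cylinder_anti x hkl)⟩

theorem countable_cylinders [Countable D] : (cylinders D).Countable := by
  refine (countable_range fun l : List D => {y | PiNat.res y l.length = l}).mono ?_
  rintro _ ⟨x, k, rfl⟩
  exact ⟨PiNat.res x k, by simp [PiNat.cylinder_eq_res]⟩

variable [MeasurableSpace D] [MeasurableSingletonClass D]

section Trajectory

open ProbabilityTheory

variable {κ : (k : ℕ) → Kernel (Finset.Iic k → D) D} [∀ k, IsMarkovKernel (κ k)] {μ₀ : Measure D}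

theorem trajMeasure_cylinder_one (x : ℕ → D) :
    Kernel.trajMeasure (X := fun _ => D) μ₀ κ (PiNat.cylinder x 1) = μ₀ {x 0} := by
  have hmap : (Kernel.trajMeasure (X := fun _ => D) μ₀ κ).map (Preorder.frestrictLe 0) =
      μ₀.map (MeasurableEquiv.piUnique fun _ : Finset.Iic 0 => D).symm := by
    rw [Kernel.trajMeasure, Measure.map_comp _ _ (by fun_prop), Kernel.traj_map_frestrictLe,
      Kernel.partialTraj_self, Measure.id_comp]
  rw [cylinder_succ_eq_preimage_frestrictLe, ← Measure.map_apply (by fun_prop)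
    (measurableSet_singleton _), hmap, MeasurableEquiv.map_apply]
  congr 1
  ext d
  simp only [mem_preimage, mem_singleton_iff]
  exact MeasurableEquiv.symm_apply_eq _

theorem trajMeasure_cylinder_succ [IsProbabilityMeasure μ₀] (x : ℕ → D) (k : ℕ) :
    Kernel.trajMeasure (X := fun _ => D) μ₀ κ (PiNat.cylinder x (k + 2)) =
      Kernel.trajMeasure (X := fun _ => D) μ₀ κ (PiNat.cylinder x (k + 1)) *
        κ k (Preorder.frestrictLe k x) {x (k + 1)} := by
  set w := Preorder.frestrictLe (π := fun _ => D) k x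
  have hcyl : PiNat.cylinder x (k + 2) =
      (fun y : ℕ → D => (Preorder.frestrictLe (π := fun _ => D) k y, y (k + 1))) ⁻¹'
        ({w} ×ˢ {x (k + 1)}) := by
    rw [cylinder_succ, cylinder_succ_eq_preimage_frestrictLe]
    rfl
  rw [hcyl, ← Measure.map_apply (by fun_prop)
    ((measurableSet_singleton _).prod (measurableSet_singleton _)),
    ← Kernel.map_frestrictLe_trajMeasure_compProd_eq_map_trajMeasure,
    Measure.compProd_apply_prod (measurableSet_singleton _) (measurableSet_singleton _),
    lintegral_singleton, Measure.map_apply (by fun_prop) (measurableSet_singleton _), mul_comm,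
    ← cylinder_succ_eq_preimage_frestrictLe]

end Trajectory

/-- A process on `D` is determined by the law `q x k` of its `k`-th value given the first `k`
values `x 0, …, x (k - 1)`. -/
theorem exists_measure_cylinder_succ_eq [Finite D] [Nonempty D] {q : (ℕ → D) → ℕ → Measure D}
    (hprob : ∀ x k, IsProbabilityMeasure (q x k))
    (hq : ∀ x k, ∀ y ∈ PiNat.cylinder x k, q y k = q x k) :
    ∃ μ : Measure (ℕ → D), IsProbabilityMeasure μ ∧
      ∀ x k, μ (PiNat.cylinder x (k + 1)) = μ (PiNat.cylinder x k) * q x k {x k} := by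
  let κ : (k : ℕ) → ProbabilityTheory.Kernel (Finset.Iic k → D) D := fun k =>
    .ofFunOfCountable fun w =>
      q (Function.invFun (Preorder.frestrictLe (π := fun _ => D) k) w) (k + 1)
  have : ∀ k, ProbabilityTheory.IsMarkovKernel (κ k) := fun k => ⟨fun w => hprob _ _⟩
  have hκ : ∀ x k, κ k (Preorder.frestrictLe k x) = q x (k + 1) := fun x k => by
    refine hq _ _ _ ?_
    rw [cylinder_succ_eq_preimage_frestrictLe]
    exact Function.invFun_eq ⟨x, rfl⟩
  obtain ⟨x₀⟩ : Nonempty (ℕ → D) := inferInstance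
  refine ⟨ProbabilityTheory.Kernel.trajMeasure (X := fun _ => D) (q x₀ 0) κ, inferInstance,
    fun x k => ?_⟩
  cases k with
  | zero =>
    rw [trajMeasure_cylinder_one, PiNat.cylinder_zero, measure_univ, one_mul,
      hq x₀ 0 x (by simp)]
  | succ k => rw [trajMeasure_cylinder_succ, hκ]

theorem exists_isProbabilityMeasure_singleton_mul_sum_le {D : Type*} [Fintype D] [Nonempty D]
    [MeasurableSpace D] [MeasurableSingletonClass D] {p : D → ℝ≥0∞} (hp : ∀ d, p d ≠ ∞) :
    ∃ q : Measure D, IsProbabilityMeasure q ∧ ∀ d, q {d} * ∑ i, p i ≤ p d := by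
  rcases eq_or_ne (∑ i, p i) 0 with h | h
  · obtain ⟨d₀⟩ := ‹Nonempty D›
    exact ⟨Measure.dirac d₀, inferInstance, fun d => by rw [h, mul_zero]; exact zero_le⟩
  rw [← tsum_fintype (L := .unconditional D)] at h
  have hfin : ∑' i, p i ≠ ∞ := by
    simpa only [tsum_fintype, ENNReal.sum_ne_top] using fun d _ => hp d
  refine ⟨(PMF.normalize p h hfin).toMeasure, inferInstance, fun d => ?_⟩
  rw [PMF.toMeasure_apply_singleton _ _ (measurableSet_singleton d), PMF.normalize_apply,
    tsum_fintype, mul_assoc]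
  exact mul_le_of_le_one_right' (ENNReal.inv_mul_le_one _)

/-- Distribute the mass of a cylinder over its successors proportionally to `φ`. -/
theorem exists_measure_cylinder_mul_le [Finite D] [Nonempty D] {φ : OuterMeasure (ℕ → D)}
    (hφ : φ univ ≠ ∞) :
    ∃ μ : Measure (ℕ → D), IsProbabilityMeasure μ ∧
      ∀ x k, μ (PiNat.cylinder x k) * φ univ ≤ φ (PiNat.cylinder x k) := by
  have := Fintype.ofFinite D
  choose q hprob hq using fun (S : Set (ℕ → D)) k =>
    exists_isProbabilityMeasure_singleton_mul_sum_le (p := fun d => φ (S ∩ {y | y k = d}))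
      fun d => ne_top_of_le_ne_top hφ (measure_mono (subset_univ _))
  obtain ⟨μ, hμ, hμq⟩ := exists_measure_cylinder_succ_eq (q := fun x k => q (PiNat.cylinder x k) k)
    (fun x k => hprob _ _) fun x k y hy => by rw [PiNat.mem_cylinder_iff_eq.1 hy]
  refine ⟨μ, hμ, fun x k => ?_⟩
  induction k with
  | zero => simp
  | succ k ih =>
    have hsum : φ (PiNat.cylinder x k) ≤ ∑ d, φ (PiNat.cylinder x k ∩ {y | y k = d}) := by
      refine (measure_mono fun y hy => ?_).trans (measure_iUnion_fintype_le φ _)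
      exact mem_iUnion.2 ⟨y k, hy, rfl⟩
    calc μ (PiNat.cylinder x (k + 1)) * φ univ
        = q (PiNat.cylinder x k) k {x k} * (μ (PiNat.cylinder x k) * φ univ) := by
          rw [hμq]; ring
      _ ≤ q (PiNat.cylinder x k) k {x k} * ∑ d, φ (PiNat.cylinder x k ∩ {y | y k = d}) := by
          gcongr; exact ih.trans hsum
      _ ≤ φ (PiNat.cylinder x (k + 1)) := by rw [cylinder_succ]; exact hq _ k (x k)

theorem exists_measure_compl_eq_zero_cylinder_mul_le [Finite D] [Nonempty D] [TopologicalSpace D]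
    [DiscreteTopology D] {φ : OuterMeasure (ℕ → D)} {K : Set (ℕ → D)} (hK : IsClosed K)
    (h0 : φ K ≠ 0) (htop : φ K ≠ ∞) :
    ∃ μ : Measure (ℕ → D), IsProbabilityMeasure μ ∧ μ Kᶜ = 0 ∧
      ∀ x k, μ (PiNat.cylinder x k) * φ K ≤ φ (PiNat.cylinder x k) := by
  obtain ⟨μ, hμ, hμK⟩ := exists_measure_cylinder_mul_le (φ := OuterMeasure.restrict K φ)
    (by simpa only [OuterMeasure.restrict_apply, univ_inter] using htop)
  simp only [OuterMeasure.restrict_apply, univ_inter] at hμK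
  refine ⟨μ, hμ, measure_null_of_locally_null _ fun x hx => ?_,
    fun x k => (hμK x k).trans (measure_mono inter_subset_left)⟩
  obtain ⟨_, ⟨z, k, rfl⟩, hxz, hzK⟩ :=
    (PiNat.isTopologicalBasis_cylinders fun _ => D).exists_subset_of_mem_open hx hK.isOpen_compl
  rw [← PiNat.mem_cylinder_iff_eq.1 hxz] at hzK
  have hnull : μ (PiNat.cylinder x k) * φ K ≤ 0 := by
    simpa only [(subset_compl_iff_disjoint_right.1 hzK).inter_eq, measure_empty] using hμK x k
  exact ⟨PiNat.cylinder x k, mem_nhdsWithin_of_mem_nhds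
    ((PiNat.isOpen_cylinder _ x k).mem_nhds (PiNat.self_mem_cylinder x k)),
    (mul_eq_zero.1 (le_zero_iff.1 hnull)).resolve_right h0⟩

/-- Frostman's lemma for the net of cylinders of a sequence space. -/
theorem exists_isCompact_measure_cylinder_le [Finite D] [Nonempty D] [TopologicalSpace D]
    [DiscreteTopology D] {A : Set (ℕ → D)} (hA : AnalyticSet A) {w : Set (ℕ → D) → ℝ≥0∞}
    (hw : w univ ≠ ∞) (h0 : netContent (cylinders D) w A ≠ 0) :
    ∃ K ⊆ A, IsCompact K ∧ ∃ μ : Measure (ℕ → D), IsProbabilityMeasure μ ∧ μ Kᶜ = 0 ∧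
      ∃ c : NNReal, ∀ x k, μ (PiNat.cylinder x k) ≤ c * w (PiNat.cylinder x k) := by
  set φ := netContent (cylinders D) w
  have hφ : ∀ x k, φ (PiNat.cylinder x k) ≤ w (PiNat.cylinder x k) := fun x k =>
    netContent_le ⟨x, k, rfl⟩
  have hcap : IsChoquetCapacity φ := isNet_cylinders.isChoquetCapacity_netContent <| by
    rintro _ ⟨x, k, rfl⟩
    exact PiNat.isOpen_cylinder _ x k
  obtain ⟨a, ha0, haA⟩ := exists_between (pos_iff_ne_zero.2 h0)
  obtain ⟨K, hKA, hK, haK⟩ := hcap.exists_isCompact_le hA haA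
  have hK0 : φ K ≠ 0 := (ha0.trans_le haK).ne'
  have hKtop : φ K ≠ ∞ := by
    obtain ⟨x⟩ : Nonempty (ℕ → D) := inferInstance
    have hφuniv : φ univ ≤ w univ := by simpa only [PiNat.cylinder_zero] using hφ x 0
    exact ne_top_of_le_ne_top hw ((measure_mono (subset_univ K)).trans hφuniv)
  obtain ⟨μ, hμ, hμK, hμφ⟩ := exists_measure_compl_eq_zero_cylinder_mul_le hK.isClosed hK0 hKtop
  refine ⟨K, hKA, hK, μ, hμ, hμK, (φ K)⁻¹.toNNReal, fun x k => ?_⟩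
  rw [ENNReal.coe_toNNReal (ENNReal.inv_ne_top.2 hK0), mul_comm, ← div_eq_mul_inv,
    ENNReal.le_div_iff_mul_le (.inl hK0) (.inl hKtop)]
  exact (hμφ x k).trans (hφ x k)

end SequenceSpace

section Frostman

theorem exists_le_two_inv_pow_le_two_mul {r : ℝ≥0∞} (h0 : 0 < r) (h1 : r ≤ 1) :
    ∃ k : ℕ, r ≤ 2⁻¹ ^ k ∧ 2⁻¹ ^ k ≤ 2 * r := by
  lift r to NNReal using ne_top_of_le_ne_top ENNReal.one_ne_top h1
  obtain ⟨k, hlt, hle⟩ := exists_nat_pow_near_of_lt_one (ENNReal.coe_pos.1 h0)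
    (ENNReal.coe_le_one_iff.1 h1) (show (0 : NNReal) < 2⁻¹ by norm_num)
    (show (2⁻¹ : NNReal) < 1 by norm_num)
  rw [pow_succ, mul_comm, inv_mul_lt_iff₀ two_pos] at hlt
  refine ⟨k, ?_, ?_⟩ <;> rw [← ENNReal.coe_inv_two]
  · exact_mod_cast hle
  · exact_mod_cast hlt.le

section IsFrostman

variable {X Y : Type*} [MeasurableSpace X] [PseudoEMetricSpace X] [MeasurableSpace Y]
  [PseudoEMetricSpace Y] {μ : Measure X} {t : ℝ}

/-- The Frostman condition with exponent `t`: the measure of a set is at most a constant times the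
`t`-th power of its diameter. -/
def IsFrostman (t : ℝ) (μ : Measure X) : Prop :=
  ∃ C : NNReal, ∀ s, μ s ≤ C * ediam s ^ t

theorem isFrostman_of_isClosed {C : NNReal} (h : ∀ s, IsClosed s → μ s ≤ C * ediam s ^ t) :
    IsFrostman t μ :=
  ⟨C, fun s => (measure_mono subset_closure).trans <|
    (h _ isClosed_closure).trans_eq (by rw [ediam_closure])⟩

theorem IsFrostman.map [OpensMeasurableSpace Y] (hμ : IsFrostman t μ) (ht : 0 ≤ t) {f : X → Y}
    (hf : Measurable f) {L : NNReal} (hL : AntilipschitzWith L f) : IsFrostman t (μ.map f) := by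
  obtain ⟨C, hC⟩ := hμ
  refine isFrostman_of_isClosed (C := C * L ^ t) fun s hs => ?_
  calc μ.map f s = μ (f ⁻¹' s) := Measure.map_apply hf hs.measurableSet
    _ ≤ C * (L * ediam s) ^ t :=
      (hC _).trans (by gcongr; exact hL.ediam_preimage_le s)
    _ = ↑(C * L ^ t) * ediam s ^ t := by
      rw [ENNReal.mul_rpow_of_nonneg _ _ ht, ENNReal.coe_mul, ENNReal.coe_rpow_of_nonneg _ ht,
        mul_assoc]

theorem isFrostman_of_forall_pow [IsProbabilityMeasure μ] (ht : 0 ≤ t) {c : NNReal}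
    (h : ∀ k : ℕ, ∀ s, IsClosed s → ediam s ≤ 2⁻¹ ^ k → μ s ≤ c * (2⁻¹ ^ k) ^ t) :
    IsFrostman t μ := by
  refine isFrostman_of_isClosed (C := c * 2 ^ t + 1) fun s hs => ?_
  rw [ENNReal.coe_add, ENNReal.coe_mul, ENNReal.coe_rpow_of_nonneg _ ht, ENNReal.coe_one,
    ENNReal.coe_ofNat]
  rcases le_or_gt 1 (ediam s) with h1 | h1
  · calc μ s ≤ 1 * 1 ^ t := by simpa using prob_le_one
      _ ≤ (c * 2 ^ t + 1) * ediam s ^ t := by gcongr; exact le_add_self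
  rcases eq_zero_or_pos (ediam s) with h0 | h0
  · have hlim : Filter.Tendsto (fun k : ℕ => (c : ℝ≥0∞) * ((2⁻¹ : ℝ≥0∞) ^ k) ^ t) Filter.atTop
        (nhds (c * 0 ^ t)) :=
      ENNReal.Tendsto.const_mul ((ENNReal.continuous_rpow_const.tendsto 0).comp
        (ENNReal.tendsto_pow_atTop_nhds_zero_of_lt_one (by norm_num))) (Or.inr ENNReal.coe_ne_top)
    calc μ s ≤ c * 0 ^ t := ge_of_tendsto' hlim fun k => h k s hs (h0 ▸ zero_le)
      _ ≤ (c * 2 ^ t + 1) * ediam s ^ t := by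
        rw [h0]
        gcongr
        exact le_add_right (le_mul_of_one_le_right' <|
          by simpa using ENNReal.rpow_le_rpow one_le_two ht)
  obtain ⟨k, hle, hge⟩ := exists_le_two_inv_pow_le_two_mul h0 h1.le
  calc μ s ≤ c * (2⁻¹ ^ k) ^ t := h k s hs hle
    _ ≤ c * (2 * ediam s) ^ t := by gcongr
    _ = c * 2 ^ t * ediam s ^ t := by rw [ENNReal.mul_rpow_of_nonneg _ _ ht, mul_assoc]
    _ ≤ (c * 2 ^ t + 1) * ediam s ^ t := by gcongr; exact le_self_add

end IsFrostman

theorem hausdorffMeasure_image_eq_zero_of_netContent {X Y : Type*} [EMetricSpace Y]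
    [MeasurableSpace Y] [BorelSpace Y] {f : X → Y} {𝓒 : Set (Set X)} (h𝓒 : 𝓒.Countable) {t : ℝ}
    (ht : 0 < t) {E : Set X} (h : netContent 𝓒 (fun C => ediam (f '' C) ^ t) E = 0) :
    μH[t] (f '' E) = 0 := by
  have hpos : ∀ N : ℕ, 0 < ((N : ℝ≥0∞)⁻¹) ^ t := fun N =>
    ENNReal.rpow_pos_of_nonneg (ENNReal.inv_pos.2 (ENNReal.natCast_ne_top N)) ht.le
  choose T hT𝓒 hET hTw using fun N => exists_cover_of_netContent_lt (h.trans_lt (hpos N))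
  have hcountable : ∀ N, Countable (T N) := fun N => (h𝓒.mono (hT𝓒 N)).to_subtype
  have hlim : Filter.Tendsto (fun N : ℕ => ((N : ℝ≥0∞)⁻¹) ^ t) Filter.atTop (nhds 0) := by
    have := (ENNReal.continuous_rpow_const (y := t)).tendsto 0
    rw [ENNReal.zero_rpow_of_pos ht] at this
    exact this.comp ENNReal.tendsto_inv_nat_nhds_zero
  refine le_zero_iff.1 <| (Measure.hausdorffMeasure_le_liminf_tsum t (f '' E)
    (fun N : ℕ => (N : ℝ≥0∞)⁻¹) ENNReal.tendsto_inv_nat_nhds_zero (fun N (C : T N) => f '' C)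
    (.of_forall fun N C => ?_) (.of_forall fun N => ?_)).trans ?_
  · exact (ENNReal.rpow_le_rpow_iff ht).1 ((ENNReal.le_tsum C).trans (hTw N).le)
  · rw [← image_iUnion, ← sUnion_eq_iUnion]
    exact image_mono (hET N)
  · exact (Filter.liminf_le_liminf (.of_forall fun N => (hTw N).le)).trans hlim.liminf_eq.le

section CubeCode

variable {n : ℕ}

/-- The point of the unit cube `[0, 1]ⁿ` whose coordinates have the given binary digits. -/
noncomputable def cubeCode (x : ℕ → Fin n → Fin 2) : Fin n → ℝ :=
  fun i => Real.ofDigits fun j => x j i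

theorem edist_cubeCode_le {x y : ℕ → Fin n → Fin 2} {k : ℕ} (h : x ∈ PiNat.cylinder y k) :
    edist (cubeCode x) (cubeCode y) ≤ 2⁻¹ ^ k := by
  refine edist_pi_le_iff.2 fun i => ?_
  have hi : |cubeCode x i - cubeCode y i| ≤ ((2 : ℕ) ^ k : ℝ)⁻¹ :=
    Real.abs_ofDigits_sub_ofDigits_le fun j hj => by rw [PiNat.mem_cylinder_iff.1 h j hj]
  rw [edist_dist, Real.dist_eq]
  refine (ENNReal.ofReal_le_ofReal hi).trans_eq ?_
  rw [ENNReal.ofReal_inv_of_pos (by positivity), ENNReal.ofReal_pow (by positivity)]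
  simp [ENNReal.inv_pow]

theorem continuous_cubeCode : Continuous (cubeCode (n := n)) := by
  refine continuous_iff_continuousAt.2 fun x => EMetric.tendsto_nhds.2 fun ε hε => ?_
  obtain ⟨k, hk⟩ := ((ENNReal.tendsto_pow_atTop_nhds_zero_of_lt_one
    (show (2⁻¹ : ℝ≥0∞) < 1 by norm_num)).eventually_lt_const hε).exists
  filter_upwards [(PiNat.isOpen_cylinder _ x k).mem_nhds (PiNat.self_mem_cylinder x k)] with y hy
  exact (edist_cubeCode_le hy).trans_lt hk

theorem ediam_cubeCode_image_cylinder_le (x : ℕ → Fin n → Fin 2) (k : ℕ) :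
    ediam (cubeCode '' PiNat.cylinder x k) ≤ 2⁻¹ ^ k := by
  refine ediam_image_le_iff.2 fun y hy z hz => edist_cubeCode_le ?_
  rwa [PiNat.mem_cylinder_iff_eq.1 hz]

theorem pi_Ico_subset_range_cubeCode :
    univ.pi (fun _ => Ico 0 1) ⊆ range (cubeCode (n := n)) := fun y hy =>
  ⟨fun j i => Real.digits (y i) 2 j, funext fun i =>
    Real.ofDigits_digits one_lt_two (hy i (mem_univ i))⟩

/-- The integer coordinates, at scale `2 ^ (-k)`, of the dyadic cube of a coded point. -/
def dyadicIndex (x : ℕ → Fin n → Fin 2) : ℕ → Fin n → ℤ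
  | 0 => 0
  | k + 1 => fun i => 2 * dyadicIndex x k i + (x k i : ℕ)

theorem mem_cylinder_of_dyadicIndex_eq {x y : ℕ → Fin n → Fin 2} {k : ℕ}
    (h : dyadicIndex x k = dyadicIndex y k) : x ∈ PiNat.cylinder y k := by
  induction k with
  | zero => simp
  | succ k ih =>
    have hi : ∀ i, dyadicIndex x k i = dyadicIndex y k i ∧ x k i = y k i := fun i => by
      have := congrFun h i
      simp only [dyadicIndex] at this
      omega
    rw [cylinder_succ]
    exact ⟨ih (funext fun i => (hi i).1), funext fun i => (hi i).2⟩

theorem two_pow_mul_sum_ofDigitsTerm (x : ℕ → Fin n → Fin 2) (k : ℕ) (i : Fin n) :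
    2 ^ k * ∑ j ∈ Finset.range k, Real.ofDigitsTerm (fun j => x j i) j = dyadicIndex x k i := by
  induction k with
  | zero => simp [dyadicIndex]
  | succ k ih =>
    rw [Finset.sum_range_succ, mul_add, pow_succ', mul_assoc, ih]
    simp only [dyadicIndex, Real.ofDigitsTerm]
    push_cast
    field_simp
    ring

theorem two_pow_mul_cubeCode_mem_Icc (x : ℕ → Fin n → Fin 2) (k : ℕ) (i : Fin n) :
    2 ^ k * cubeCode x i ∈ Icc (dyadicIndex x k i : ℝ) (dyadicIndex x k i + 1) := by
  have h0 := Real.ofDigits_nonneg (fun j => x (j + k) i)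
  have h1 := Real.ofDigits_le_one (fun j => x (j + k) i)
  have hval : 2 ^ k * cubeCode x i =
      dyadicIndex x k i + Real.ofDigits (fun j => x (j + k) i) := by
    rw [cubeCode, Real.ofDigits_eq_sum_add_ofDigits _ k, mul_add, two_pow_mul_sum_ofDigitsTerm]
    push_cast
    field_simp
  constructor <;> linarith

theorem dyadicIndex_mem_Icc_of_edist_le {x y : ℕ → Fin n → Fin 2} {k : ℕ}
    (h : edist (cubeCode x) (cubeCode y) ≤ 2⁻¹ ^ k) :
    dyadicIndex x k ∈ Finset.Icc (dyadicIndex y k - 2) (dyadicIndex y k + 2) := by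
  have hi : ∀ i, |dyadicIndex x k i - dyadicIndex y k i| ≤ 2 := fun i => by
    have hx := two_pow_mul_cubeCode_mem_Icc x k i
    have hy := two_pow_mul_cubeCode_mem_Icc y k i
    have hxy : |2 ^ k * cubeCode x i - 2 ^ k * cubeCode y i| ≤ 1 := by
      have hdist : |cubeCode x i - cubeCode y i| ≤ 2⁻¹ ^ k := by
        have := (edist_le_pi_edist (cubeCode x) (cubeCode y) i).trans h
        rw [edist_dist, Real.dist_eq] at this
        simpa using ENNReal.toReal_mono (by finiteness) this
      rw [← mul_sub, abs_mul, abs_of_pos (by positivity)]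
      calc (2 : ℝ) ^ k * |cubeCode x i - cubeCode y i| ≤ 2 ^ k * 2⁻¹ ^ k := by gcongr
        _ = 1 := by rw [← mul_pow]; norm_num
    rw [← @Int.cast_le ℝ]
    push_cast
    rw [abs_le] at hxy ⊢
    constructor <;> linarith [hx.1, hx.2, hy.1, hy.2]
  rw [Finset.mem_Icc, Pi.le_def, Pi.le_def]
  exact ⟨fun i => by have := abs_le.1 (hi i); simp; omega,
    fun i => by have := abs_le.1 (hi i); simp; omega⟩

theorem measure_cubeCode_preimage_le {μ : Measure (ℕ → Fin n → Fin 2)} {c : ℝ≥0∞} {k : ℕ}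
    (hμ : ∀ x, μ (PiNat.cylinder x k) ≤ c) {s : Set (Fin n → ℝ)} (hs : ediam s ≤ 2⁻¹ ^ k) :
    μ (cubeCode ⁻¹' s) ≤ 5 ^ n * c := by
  rcases eq_empty_or_nonempty (cubeCode ⁻¹' s) with h | ⟨y, hy⟩
  · simp [h]
  set I := Finset.Icc (dyadicIndex y k - 2) (dyadicIndex y k + 2)
  have hI : I.card = 5 ^ n := by
    have h5 : ∀ a : ℤ, (a + 2 + 1 - (a - 2)).toNat = 5 := by omega
    simp [I, Pi.card_Icc, h5]
  have hcover : cubeCode ⁻¹' s ⊆ ⋃ N ∈ I, {x | dyadicIndex x k = N} := by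
    refine fun x hx => mem_iUnion₂.2 ⟨_, dyadicIndex_mem_Icc_of_edist_le ?_, rfl⟩
    exact (edist_le_ediam_of_mem (s := s) hx hy).trans hs
  have hpiece : ∀ N, μ {x | dyadicIndex x k = N} ≤ c := fun N => by
    rcases eq_empty_or_nonempty {x : ℕ → Fin n → Fin 2 | dyadicIndex x k = N} with h | ⟨z, rfl⟩
    · simp [h]
    · exact (measure_mono fun x hx => mem_cylinder_of_dyadicIndex_eq hx).trans (hμ z)
  calc μ (cubeCode ⁻¹' s) ≤ ∑ N ∈ I, μ {x | dyadicIndex x k = N} :=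
        (measure_mono hcover).trans (measure_biUnion_finset_le _ _)
    _ ≤ I.card • c := Finset.sum_le_card_nsmul _ _ _ fun N _ => hpiece N
    _ = 5 ^ n * c := by rw [hI, nsmul_eq_mul]; norm_num

theorem exists_isFrostman_of_hausdorffMeasure_inter_range_cubeCode_ne_zero
    {A : Set (Fin n → ℝ)} (hA : AnalyticSet A) {t : ℝ} (ht : 0 < t)
    (hAt : μH[t] (A ∩ range cubeCode) ≠ 0) :
    ∃ K ⊆ A, IsCompact K ∧ ∃ μ : Measure (Fin n → ℝ),
      IsProbabilityMeasure μ ∧ μ Kᶜ = 0 ∧ IsFrostman t μ := by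
  have hcont := continuous_cubeCode (n := n)
  have hA0 : netContent (cylinders (Fin n → Fin 2)) (fun C => ediam (cubeCode '' C) ^ t)
      (cubeCode ⁻¹' A) ≠ 0 := fun h0 => hAt <| by
    rw [← image_preimage_eq_inter_range]
    exact hausdorffMeasure_image_eq_zero_of_netContent countable_cylinders ht h0
  have hdiam : ∀ x k, ediam (cubeCode '' PiNat.cylinder (E := fun _ => Fin n → Fin 2) x k) ^ t ≤
      (2⁻¹ ^ k) ^ t := fun x k =>
    ENNReal.rpow_le_rpow (ediam_cubeCode_image_cylinder_le x k) ht.le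
  obtain ⟨K, hKA, hK, μ, hμ, hμK, c, hμc⟩ :=
    exists_isCompact_measure_cylinder_le (hA.preimage hcont)
      (ne_top_of_le_ne_top ENNReal.one_ne_top <| by simpa using hdiam 0 0) hA0
  have hprob := Measure.isProbabilityMeasure_map (μ := μ) hcont.measurable.aemeasurable
  refine ⟨cubeCode '' K, image_subset_iff.2 hKA, hK.image hcont, μ.map cubeCode, hprob, ?_,
    isFrostman_of_forall_pow ht.le (c := 5 ^ n * c) fun k s hs hsk => ?_⟩
  · rw [Measure.map_apply hcont.measurable (hK.image hcont).isClosed.measurableSet.compl]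
    exact measure_mono_null (fun x hx hxK => hx (mem_image_of_mem _ hxK)) hμK
  · rw [Measure.map_apply hcont.measurable hs.measurableSet, ENNReal.coe_mul, mul_assoc]
    exact_mod_cast measure_cubeCode_preimage_le
      (fun x => (hμc x k).trans (mul_le_mul_right (hdiam x k) _)) hsk

end CubeCode

theorem exists_lt_dimH_preimage_inter_pi_Ico {E : Type*} [EMetricSpace E] {n : ℕ}
    {f : E → Fin n → ℝ} {g : (Fin n → ℝ) → E} {L : NNReal} (hg : LipschitzWith L g)
    (hgf : Function.LeftInverse g f) {A : Set E} {d : ℝ≥0∞} (hd : d < dimH A) :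
    ∃ a : Fin n → ℝ,
      d < dimH ((fun y => g (a + y)) ⁻¹' A ∩ univ.pi (fun _ => Ico (0 : ℝ) 1)) := by
  set Q : Set (Fin n → ℝ) := univ.pi fun _ => Ico 0 1
  set F : (Fin n → ℤ) → (Fin n → ℝ) → E := fun m y => g ((fun i => (m i : ℝ)) + y)
  have hcover : A ⊆ ⋃ m, F m '' (F m ⁻¹' A ∩ Q) := fun x hx => by
    have hF : F (fun i => ⌊f x i⌋) (fun i => Int.fract (f x i)) = x := by
      refine (congrArg g (funext fun i => ?_)).trans (hgf x)
      exact Int.floor_add_fract _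
    exact mem_iUnion.2 ⟨_, _, ⟨mem_preimage.2 (hF.symm ▸ hx),
      fun i _ => ⟨Int.fract_nonneg _, Int.fract_lt_one _⟩⟩, hF⟩
  have hlt := hd.trans_le (dimH_mono hcover)
  rw [dimH_iUnion, lt_iSup_iff] at hlt
  obtain ⟨m, hm⟩ := hlt
  exact ⟨_, hm.trans_le ((hg.comp (isometry_add_left _).lipschitz).dimH_image_le _)⟩

/-- **Frostman's lemma** for analytic sets. -/
theorem exists_isFrostman {E : Type*} [NormedAddCommGroup E] [NormedSpace ℝ E]
    [FiniteDimensional ℝ E] [MeasurableSpace E] [BorelSpace E] {A : Set E} (hA : AnalyticSet A)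
    {d : NNReal} (hd0 : 0 < d) (hd : d < dimH A) :
    ∃ K ⊆ A, IsCompact K ∧ ∃ μ : Measure E,
      IsProbabilityMeasure μ ∧ μ Kᶜ = 0 ∧ IsFrostman d μ := by
  let Φ : E ≃L[ℝ] (Fin (Module.finrank ℝ E) → ℝ) :=
    ContinuousLinearEquiv.ofFinrankEq (by simp)
  obtain ⟨a, ha⟩ := exists_lt_dimH_preimage_inter_pi_Ico Φ.symm.lipschitz Φ.symm_apply_apply hd
  set g : (Fin (Module.finrank ℝ E) → ℝ) → E := fun y => Φ.symm (a + y)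
  have hg : Continuous g := by fun_prop
  have hgA : μH[(d : ℝ)] (g ⁻¹' A ∩ range cubeCode) ≠ 0 := fun h0 =>
    ENNReal.top_ne_zero <| (hausdorffMeasure_of_lt_dimH ha).symm.trans <|
      measure_mono_null (inter_subset_inter_right _ pi_Ico_subset_range_cubeCode) h0
  obtain ⟨K, hKA, hK, μ, hμ, hμK, hFr⟩ :=
    exists_isFrostman_of_hausdorffMeasure_inter_range_cubeCode_ne_zero (hA.preimage hg) hd0 hgA
  refine ⟨g '' K, image_subset_iff.2 hKA, hK.image hg, μ.map g,
    Measure.isProbabilityMeasure_map hg.measurable.aemeasurable, ?_,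
    hFr.map d.2 hg.measurable (Φ.symm.antilipschitz.comp (isometry_add_left a).antilipschitz)⟩
  rw [Measure.map_apply hg.measurable (hK.image hg).isClosed.measurableSet.compl]
  exact measure_mono_null (fun x hx hxK => hx (mem_image_of_mem _ hxK)) hμK

end Frostman

section IsFrostmanConsequences

namespace IsFrostman

theorem absolutelyContinuous {X : Type*} [EMetricSpace X] [MeasurableSpace X] [BorelSpace X]
    {μ : Measure X} {t : ℝ} (hμ : IsFrostman t μ) : μ ≪ μH[t] := by
  obtain ⟨C, hC⟩ := hμ
  have hle : ((C : ℝ≥0∞) + 1)⁻¹ • μ ≤ μH[t] := by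
    refine Measure.le_hausdorffMeasure t _ 1 one_pos fun s _ => ?_
    rw [Measure.smul_apply, smul_eq_mul, ENNReal.inv_mul_le_iff (by simp) (by simp)]
    exact (hC s).trans (by gcongr; exact le_self_add)
  exact .trans (Measure.absolutelyContinuous_smul (by simp)) hle.absolutelyContinuous

theorem measure_eq_zero_of_dimH_lt {X : Type*} [EMetricSpace X] [MeasurableSpace X] [BorelSpace X]
    {μ : Measure X} {t : NNReal} (hμ : IsFrostman t μ) {H : Set X} (hH : dimH H < t) : μ H = 0 :=
  hμ.absolutelyContinuous (hausdorffMeasure_of_dimH_lt hH)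

end IsFrostman

theorem pow_rpow_comm_ennreal (x : ℝ≥0∞) (k : ℕ) (s : ℝ) : (x ^ k) ^ s = (x ^ s) ^ k := by
  rw [← ENNReal.rpow_natCast, ← ENNReal.rpow_mul, mul_comm, ENNReal.rpow_mul, ENNReal.rpow_natCast]

theorem edist_rpow_neg_le_one_add_tsum {X : Type*} [PseudoEMetricSpace X] {s : ℝ} (hs : 0 ≤ s)
    (x y : X) :
    edist x y ^ (-s) ≤
      1 + ∑' k : ℕ, (closedEBall y (2⁻¹ ^ k)).indicator (fun _ => 2 ^ s * (2 ^ s) ^ k) x := by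
  have h2s : (1 : ℝ≥0∞) ≤ 2 ^ s := by simpa using ENNReal.rpow_le_rpow one_le_two hs
  rcases le_or_gt 1 (edist x y) with h1 | h1
  · rw [ENNReal.rpow_neg]
    refine le_add_right (ENNReal.inv_le_one.2 ?_)
    simpa using ENNReal.rpow_le_rpow h1 hs
  refine le_add_left ?_
  rcases eq_zero_or_pos (edist x y) with h0 | h0
  · have hx : ∀ k : ℕ, x ∈ closedEBall y (2⁻¹ ^ k) := fun k => by simp [h0]
    simp only [indicator_of_mem (hx _)]
    refine le_top.trans ?_
    rw [← ENNReal.tsum_const_eq_top_of_ne_zero (α := ℕ) one_ne_zero]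
    exact ENNReal.tsum_le_tsum fun k =>
      (one_le_pow_of_one_le' h2s (k + 1)).trans_eq (pow_succ' _ _)
  · obtain ⟨k, hle, hge⟩ := exists_le_two_inv_pow_le_two_mul h0 h1.le
    refine le_trans ?_ (ENNReal.le_tsum k)
    rw [indicator_of_mem (mem_closedEBall.2 hle), ENNReal.rpow_neg,
      ENNReal.inv_le_iff_le_mul
        (fun _ => (ENNReal.rpow_pos h0 (h1.trans ENNReal.one_lt_top).ne).ne')
        (fun _ => by positivity)]
    calc 1 = (2 ^ k * 2⁻¹ ^ k : ℝ≥0∞) ^ s := by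
          rw [← mul_pow, ENNReal.mul_inv_cancel two_ne_zero ENNReal.ofNat_ne_top, one_pow,
            ENNReal.one_rpow]
      _ ≤ (2 ^ k * (2 * edist x y)) ^ s := by gcongr
      _ = edist x y ^ s * (2 ^ s * (2 ^ s) ^ k) := by
        rw [ENNReal.mul_rpow_of_nonneg _ _ hs, ENNReal.mul_rpow_of_nonneg _ _ hs,
          pow_rpow_comm_ennreal]
        ring

theorem lintegral_edist_rpow_neg_le_one_add_tsum {X : Type*} [PseudoEMetricSpace X]
    [MeasurableSpace X] [OpensMeasurableSpace X] (μ : Measure X) [IsProbabilityMeasure μ] {s : ℝ}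
    (hs : 0 ≤ s) (y : X) :
    ∫⁻ x, edist x y ^ (-s) ∂μ ≤
      1 + ∑' k : ℕ, 2 ^ s * (2 ^ s) ^ k * μ (closedEBall y (2⁻¹ ^ k)) := by
  have hmeas : ∀ k : ℕ, MeasurableSet (closedEBall y (2⁻¹ ^ k)) := fun k =>
    isClosed_closedEBall.measurableSet
  refine (lintegral_mono fun x => edist_rpow_neg_le_one_add_tsum hs x y).trans_eq ?_
  rw [lintegral_add_left measurable_const, lintegral_tsum fun k =>
    (measurable_const.indicator (hmeas k)).aemeasurable]
  simp [lintegral_indicator_const (hmeas _)]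

theorem IsFrostman.exists_lintegral_edist_rpow_neg_le {X : Type*} [PseudoEMetricSpace X]
    [MeasurableSpace X] [OpensMeasurableSpace X] {μ : Measure X} [IsProbabilityMeasure μ] {t : ℝ}
    (hμ : IsFrostman t μ) {s : ℝ} (hs : 0 ≤ s) (hst : s < t) :
    ∃ M : ℝ≥0∞, M ≠ ∞ ∧ ∀ y, ∫⁻ x, edist x y ^ (-s) ∂μ ≤ M := by
  obtain ⟨C, hC⟩ := hμ
  set q : ℝ≥0∞ := 2 ^ (s - t)
  have hq : q < 1 := ENNReal.rpow_lt_one_of_one_lt_of_neg ENNReal.one_lt_two (by linarith)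
  refine ⟨1 + 2 ^ s * C * 2 ^ t * (1 - q)⁻¹, ?_, fun y => ?_⟩
  · have : 1 - q ≠ 0 := by simpa [tsub_eq_zero_iff_le] using hq
    have h2 : (2 : ℝ≥0∞) ^ s ≠ ∞ := by finiteness
    have h3 : (2 : ℝ≥0∞) ^ t ≠ ∞ := by finiteness
    finiteness
  have hball : ∀ k : ℕ, 2 ^ s * (2 ^ s) ^ k * μ (closedEBall y (2⁻¹ ^ k)) ≤
      2 ^ s * C * 2 ^ t * q ^ k := fun k => by
    calc 2 ^ s * (2 ^ s) ^ k * μ (closedEBall y (2⁻¹ ^ k))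
        ≤ 2 ^ s * (2 ^ s) ^ k * (C * (2 * 2⁻¹ ^ k) ^ t) := by
          gcongr
          exact (hC _).trans (by gcongr; exacts [hs.trans hst.le, ediam_closedEBall_le])
      _ = 2 ^ s * C * 2 ^ t * q ^ k := by
        have hq : q = 2 ^ s * 2⁻¹ ^ t := by
          rw [ENNReal.inv_rpow, ← ENNReal.rpow_neg, ← ENNReal.rpow_add _ _ two_ne_zero (by simp)]
          rfl
        rw [ENNReal.mul_rpow_of_nonneg _ _ (hs.trans hst.le), pow_rpow_comm_ennreal, hq]
        ring
  calc ∫⁻ x, edist x y ^ (-s) ∂μ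
      ≤ 1 + ∑' k : ℕ, 2 ^ s * (2 ^ s) ^ k * μ (closedEBall y (2⁻¹ ^ k)) :=
        lintegral_edist_rpow_neg_le_one_add_tsum μ hs y
    _ ≤ 1 + ∑' k : ℕ, 2 ^ s * C * 2 ^ t * q ^ k := by
        gcongr 1 + ?_
        exact ENNReal.tsum_le_tsum hball
    _ = 1 + 2 ^ s * C * 2 ^ t * (1 - q)⁻¹ := by rw [ENNReal.tsum_mul_left, ENNReal.tsum_geometric]

end IsFrostmanConsequences

section Correlations

-- `a - b + (b - a)` is the distance between `a` and `b`, as subtraction truncates at `0`.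
theorem mul_self_add_mul_self_eq_two_mul_add_sq {a b : ℝ≥0∞} (ha : a ≠ ∞) (hb : b ≠ ∞) :
    a * a + b * b = 2 * (a * b) + (a - b + (b - a)) ^ 2 := by
  wlog h : a ≤ b generalizing a b
  · have := this hb ha (le_of_not_ge h)
    rw [add_comm, this, mul_comm a b, add_comm (a - b)]
  obtain ⟨c, rfl⟩ := exists_add_of_le h
  rw [tsub_eq_zero_of_le h, ENNReal.add_sub_cancel_left ha]
  ring

theorem mul_self_le_two_mul_mul_self_add_sq (a b : ℝ≥0∞) :
    a * a ≤ 2 * (b * b) + 2 * (a - b + (b - a)) ^ 2 := by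
  have hab : a ≤ b + (a - b + (b - a)) := le_add_tsub.trans (by gcongr; exact le_self_add)
  calc a * a = a ^ 2 := (sq a).symm
    _ ≤ (b + (a - b + (b - a))) ^ 2 := by gcongr
    _ ≤ 2 * (b * b) + 2 * (a - b + (b - a)) ^ 2 := by
      simpa [mul_add, sq, show (2 : ℝ) - 1 = 1 by norm_num] using
        ENNReal.rpow_add_le_mul_rpow_add_rpow b (a - b + (b - a)) one_le_two

variable {X ι : Type*} [MeasurableSpace X] {μ : Measure X} {l : Filter ι} {F : ι → X → ℝ≥0∞}
  {c : ι → ℝ≥0∞} {J : ℝ≥0∞} {N : ι → Set X}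

theorem tendsto_lintegral_sq_sub_zero (hF : ∀ j, Measurable (F j)) (hFfin : ∀ j x, F j x ≠ ∞)
    (hJ : J ≠ ∞)
    (hlim : Filter.Tendsto (fun p : ι × ι => ∫⁻ x, F p.1 x * F p.2 x ∂μ) (l ×ˢ l) (nhds J)) :
    Filter.Tendsto (fun p : ι × ι => ∫⁻ x, (F p.1 x - F p.2 x + (F p.2 x - F p.1 x)) ^ 2 ∂μ)
      (l ×ˢ l) (nhds 0) := by
  have hexpand : ∀ p : ι × ι, ∫⁻ x, F p.1 x * F p.1 x ∂μ + ∫⁻ x, F p.2 x * F p.2 x ∂μ =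
      2 * ∫⁻ x, F p.1 x * F p.2 x ∂μ +
        ∫⁻ x, (F p.1 x - F p.2 x + (F p.2 x - F p.1 x)) ^ 2 ∂μ := fun p => by
    have hmul : ∀ i j, Measurable fun x => F i x * F j x := fun i j => (hF i).mul (hF j)
    rw [← lintegral_add_left (hmul _ _), ← lintegral_const_mul _ (hmul _ _),
      ← lintegral_add_left ((hmul _ _).const_mul 2)]
    exact lintegral_congr fun x =>
      mul_self_add_mul_self_eq_two_mul_add_sq (hFfin _ x) (hFfin _ x)
  have hdiag : Filter.Tendsto (fun j => ∫⁻ x, F j x * F j x ∂μ) l (nhds J) :=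
    hlim.comp (Filter.tendsto_id.prodMk Filter.tendsto_id)
  have hsub := ENNReal.Tendsto.sub
    ((hdiag.comp Filter.tendsto_fst).add (hdiag.comp Filter.tendsto_snd))
    (ENNReal.Tendsto.const_mul (a := 2) hlim (.inr ENNReal.ofNat_ne_top))
    (.inl (ENNReal.add_ne_top.2 ⟨hJ, hJ⟩))
  rw [two_mul, tsub_self] at hsub
  refine hsub.congr' ?_
  filter_upwards [hlim.eventually (gt_mem_nhds hJ.lt_top)] with p hp
  simp only [Function.comp_apply]
  rw [hexpand p, ENNReal.add_sub_cancel_left (ENNReal.mul_ne_top ENNReal.ofNat_ne_top hp.ne)]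

theorem setLIntegral_mul_self_le {f g : X → ℝ≥0∞} (hg : Measurable g) {c : ℝ≥0∞}
    (hgc : ∀ x, g x ≤ c) (s : Set X) :
    ∫⁻ x in s, f x * f x ∂μ ≤
      2 * (c * c * μ s) + 2 * ∫⁻ x, (f x - g x + (g x - f x)) ^ 2 ∂μ := by
  have hmul : Measurable fun x => g x * g x := hg.mul hg
  calc ∫⁻ x in s, f x * f x ∂μ
      ≤ ∫⁻ x in s, 2 * (g x * g x) + 2 * (f x - g x + (g x - f x)) ^ 2 ∂μ :=
        lintegral_mono fun x => mul_self_le_two_mul_mul_self_add_sq _ _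
    _ = 2 * ∫⁻ x in s, g x * g x ∂μ + 2 * ∫⁻ x in s, (f x - g x + (g x - f x)) ^ 2 ∂μ := by
        rw [lintegral_add_left (hmul.const_mul 2), lintegral_const_mul _ hmul,
          lintegral_const_mul' _ _ ENNReal.ofNat_ne_top]
    _ ≤ 2 * (c * c * μ s) + 2 * ∫⁻ x, (f x - g x + (g x - f x)) ^ 2 ∂μ := by
        gcongr
        · rw [← setLIntegral_const]
          exact lintegral_mono fun x => mul_le_mul' (hgc x) (hgc x)
        · exact Measure.restrict_le_self

/-- Uniform absolute continuity of the squares: the functions are Cauchy in `L²`, and each of them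
is bounded. -/
theorem tendsto_setLIntegral_mul_self_zero [l.NeBot] (hF : ∀ j, Measurable (F j))
    (hc : ∀ j, c j ≠ ∞) (hFc : ∀ j x, F j x ≤ c j) (hJ : J ≠ ∞)
    (hlim : Filter.Tendsto (fun p : ι × ι => ∫⁻ x, F p.1 x * F p.2 x ∂μ) (l ×ˢ l) (nhds J))
    (hN : Filter.Tendsto (fun j => μ (N j)) l (nhds 0)) :
    Filter.Tendsto (fun j => ∫⁻ x in N j, F j x * F j x ∂μ) l (nhds 0) := by
  have hD := tendsto_lintegral_sq_sub_zero hF (fun j x => ne_top_of_le_ne_top (hc j) (hFc j x))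
    hJ hlim
  refine ENNReal.tendsto_nhds_zero.2 fun ε hε => ?_
  have hε4 : 0 < ε / 4 := ENNReal.div_pos hε.ne' (by simp)
  obtain ⟨m, hm⟩ : ∃ m, ∀ᶠ j in l,
      ∫⁻ x, (F j x - F m x + (F m x - F j x)) ^ 2 ∂μ ≤ ε / 4 := by
    have := hD.eventually (ge_mem_nhds hε4)
    rw [Filter.prod_comm] at this
    exact (Filter.eventually_map.1 this).curry.exists
  have hcN : Filter.Tendsto (fun j => c m * c m * μ (N j)) l (nhds 0) := by
    simpa using ENNReal.Tendsto.const_mul hN (.inr (ENNReal.mul_ne_top (hc m) (hc m)))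
  filter_upwards [hm, hcN.eventually (ge_mem_nhds hε4)] with j hDj hNj
  calc ∫⁻ x in N j, F j x * F j x ∂μ ≤ 2 * (ε / 4) + 2 * (ε / 4) :=
        (setLIntegral_mul_self_le (hF m) (hFc m) (N j)).trans (by gcongr)
    _ = ε := by
        rw [show (4 : ℝ≥0∞) = 2 * 2 by norm_num, ← mul_div_assoc,
          ENNReal.mul_div_mul_left _ _ (by simp) (by simp), ENNReal.add_halves]

theorem not_tendsto_measure_zero_of_tendsto_correlation [l.NeBot] {G : ι → X → ℝ≥0∞}
    (hF : ∀ j, Measurable (F j)) (hG : ∀ j, Measurable (G j)) (hc : ∀ j, c j ≠ ∞)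
    (hFc : ∀ j x, F j x ≤ c j) (hGc : ∀ j x, G j x ≤ c j) {JF JG : ℝ≥0∞} (hJF : JF ≠ ∞)
    (hJG : JG ≠ ∞) (hJ : J ≠ 0)
    (hFlim : Filter.Tendsto (fun p : ι × ι => ∫⁻ x, F p.1 x * F p.2 x ∂μ) (l ×ˢ l) (nhds JF))
    (hGlim : Filter.Tendsto (fun p : ι × ι => ∫⁻ x, G p.1 x * G p.2 x ∂μ) (l ×ˢ l) (nhds JG))
    (hlim : Filter.Tendsto (fun j => ∫⁻ x, F j x * G j x ∂μ) l (nhds J))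
    (hNm : ∀ j, MeasurableSet (N j)) (hFG : ∀ j, ∀ᵐ x ∂μ, x ∉ N j → F j x * G j x = 0) :
    ¬Filter.Tendsto (fun j => μ (N j)) l (nhds 0) := by
  intro hN
  have hsum := (tendsto_setLIntegral_mul_self_zero hF hc hFc hJF hFlim hN).add
    (tendsto_setLIntegral_mul_self_zero hG hc hGc hJG hGlim hN)
  rw [add_zero] at hsum
  refine hJ (tendsto_nhds_unique hlim (tendsto_of_tendsto_of_tendsto_of_le_of_le
    tendsto_const_nhds hsum (fun _ => bot_le) fun j => ?_))
  have hFGN : ∀ᵐ x ∂μ, F j x * G j x = (N j).indicator (fun x => F j x * G j x) x := by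
    filter_upwards [hFG j] with x hx
    by_cases hxN : x ∈ N j
    · rw [indicator_of_mem hxN]
    · rw [indicator_of_notMem hxN, hx hxN]
  calc ∫⁻ x, F j x * G j x ∂μ = ∫⁻ x in N j, F j x * G j x ∂μ := by
        rw [← lintegral_indicator (hNm j)]
        exact lintegral_congr_ae hFGN
    _ ≤ ∫⁻ x in N j, F j x * F j x + G j x * G j x ∂μ := by
        refine lintegral_mono fun x => ?_
        rcases le_total (F j x) (G j x) with h | h
        · exact (mul_le_mul_left h _).trans le_add_self
        · exact (mul_le_mul_right h _).trans le_self_add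
    _ = ∫⁻ x in N j, F j x * F j x ∂μ + ∫⁻ x in N j, G j x * G j x ∂μ :=
        lintegral_add_left ((hF j).mul (hF j)) _

end Correlations

section TentAndBallKernel

variable {V : Type*} [NormedAddCommGroup V]

/-- The tent function of height `R` supported on the ball of radius `R`, used as a weight on the
directions `v` of the projections `slant v`. -/
noncomputable def tent (R : ℝ) (v : V) : ℝ≥0∞ := ENNReal.ofReal (R - ‖v‖)

theorem tent_le (R : ℝ) (v : V) : tent R v ≤ ENNReal.ofReal R :=
  ENNReal.ofReal_le_ofReal (sub_le_self R (norm_nonneg v))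

theorem tent_le_add (R : ℝ) (v w : V) : tent R v ≤ tent R w + ENNReal.ofReal ‖v - w‖ := by
  refine (ENNReal.ofReal_le_ofReal ?_).trans ENNReal.ofReal_add_le
  linarith [norm_sub_rev v w ▸ norm_sub_norm_le w v]

theorem tent_eq_zero {R : ℝ} {v : V} (h : R ≤ ‖v‖) : tent R v = 0 :=
  ENNReal.ofReal_eq_zero.2 (sub_nonpos.2 h)

variable [MeasureSpace V]

/-- The indicator function of the closed ball of radius `δ`, normalized to have integral `1`. -/
noncomputable def ballKernel (δ : ℝ) : V → ℝ≥0∞ :=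
  (closedBall 0 δ).indicator fun _ => (volume (closedBall (0 : V) δ))⁻¹

theorem ballKernel_le (δ : ℝ) (a : V) : ballKernel δ a ≤ (volume (closedBall (0 : V) δ))⁻¹ :=
  indicator_le_self' (fun _ _ => bot_le) a

theorem ballKernel_eq_zero {δ : ℝ} {a : V} (h : δ < ‖a‖) : ballKernel δ a = 0 :=
  indicator_of_notMem (by simpa using h) _

variable (V) in
/-- Lebesgue measure on pairs (direction, point), weighted by a tent function in the direction. -/
noncomputable def tentMeasure (R : ℝ) : Measure (V × V) :=
  volume.withDensity fun p => tent R p.1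

theorem tentMeasure_le (R : ℝ) : tentMeasure V R ≤ ENNReal.ofReal R • volume := by
  rw [← withDensity_const]
  exact withDensity_mono (.of_forall fun p => tent_le R _)

variable [BorelSpace V]

@[fun_prop]
theorem measurable_tent (R : ℝ) : Measurable (tent R : V → ℝ≥0∞) := by
  unfold tent
  fun_prop

@[fun_prop]
theorem measurable_ballKernel (δ : ℝ) : Measurable (ballKernel δ : V → ℝ≥0∞) :=
  measurable_const.indicator measurableSet_closedBall

theorem ae_tentMeasure_norm_fst_le (R : ℝ) :
    ∀ᵐ p ∂tentMeasure V R, ‖p.1‖ ≤ R := by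
  rw [tentMeasure, ae_withDensity_iff (by fun_prop)]
  exact .of_forall fun p hp => le_of_not_gt fun hlt => hp (tent_eq_zero hlt.le)

end TentAndBallKernel

section SlantCorrelation

variable {V : Type*} [NormedAddCommGroup V] [NormedSpace ℝ V]

/-- The projection of `ℝ × V` along the line spanned by `(1, v)` onto `V`. -/
def slant (v : V) (x : ℝ × V) : V := x.2 - x.1 • v

theorem slant_sub (v : V) (x y : ℝ × V) : slant v (x - y) = slant v x - slant v y := by
  simp only [slant, Prod.fst_sub, Prod.snd_sub, sub_smul]
  abel

theorem slant_neg (v : V) (x : ℝ × V) : slant v (-x) = -slant v x := by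
  simpa [slant] using slant_sub v 0 x

theorem continuous_slant : Continuous fun p : V × (ℝ × V) => slant p.1 p.2 := by
  unfold slant
  fun_prop

@[fun_prop]
theorem measurable_slant [MeasurableSpace V] [BorelSpace V] [FiniteDimensional ℝ V]
    {α : Type*} [MeasurableSpace α] {f : α → V} {g : α → ℝ × V} (hf : Measurable f)
    (hg : Measurable g) : Measurable fun a => slant (f a) (g a) :=
  continuous_slant.measurable.comp (hf.prodMk hg)

theorem norm_le_of_norm_slant_le {R ε : ℝ} (hR : 1 ≤ R) {u : ℝ × V} {v : V}
    (hu : 2 * R * |u.1| ≤ ‖u‖) (hv : ‖v‖ ≤ R) (h : ‖slant v u‖ ≤ 2 * ε) : ‖u‖ ≤ 4 * ε := by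
  have hfst : |u.1| ≤ ‖u‖ / 2 := by nlinarith [abs_nonneg u.1]
  have hle : ‖u‖ ≤ ‖u.2‖ := by
    rcases max_choice |u.1| ‖u.2‖ with h | h
    · have : ‖u‖ = |u.1| := h
      linarith [norm_nonneg u.2, abs_nonneg u.1]
    · exact h.le
  have hsnd : ‖u.2‖ ≤ ‖slant v u‖ + |u.1| * ‖v‖ := by
    simpa [slant, norm_smul] using norm_add_le (slant v u) (u.1 • v)
  nlinarith [mul_le_mul_of_nonneg_left hv (abs_nonneg u.1)]

variable [MeasureSpace V]

/-- The correlation, averaged over the directions `v` with weight `tent R v`, of the images under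
`slant v` of two point masses with difference `u`, smoothed at scales `δ` and `ε`. -/
noncomputable def slantCorrelation (R δ ε : ℝ) (u : ℝ × V) : ℝ≥0∞ :=
  ∫⁻ v, tent R v * ∫⁻ z, ballKernel δ z * ballKernel ε (z - slant v u)

/-- The limit of `slantCorrelation R δ ε u` as `δ` and `ε` tend to `0`, for `u.1 ≠ 0`. -/
noncomputable def limitCorrelation (R : ℝ) (u : ℝ × V) : ℝ≥0∞ :=
  ENNReal.ofReal |(u.1 ^ Module.finrank ℝ V)⁻¹| * tent R (u.1⁻¹ • u.2)

variable [BorelSpace V] [(volume : Measure V).IsAddHaarMeasure]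

theorem slantCorrelation_neg (R δ ε : ℝ) (u : ℝ × V) :
    slantCorrelation R δ ε (-u) = slantCorrelation R ε δ u := by
  refine lintegral_congr fun v => ?_
  rw [← lintegral_sub_right_eq_self (fun z => ballKernel δ z * _) (slant v u)]
  congr 1
  refine lintegral_congr fun z => ?_
  rw [slant_neg, mul_comm, sub_neg_eq_add, sub_add_cancel]

variable [FiniteDimensional ℝ V]

theorem lintegral_ballKernel {δ : ℝ} (hδ : 0 < δ) : ∫⁻ a : V, ballKernel δ a = 1 := by
  rw [ballKernel, lintegral_indicator_const measurableSet_closedBall,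
    ENNReal.inv_mul_cancel (measure_closedBall_pos _ _ hδ).ne' measure_closedBall_lt_top.ne]

theorem lintegral_tent_ne_top (R : ℝ) : ∫⁻ v : V, tent R v ≠ ∞ := by
  have h : ∀ v : V, tent R v ≤ (closedBall 0 R).indicator (fun _ => ENNReal.ofReal R) v := by
    intro v
    by_cases hv : v ∈ closedBall 0 R
    · rw [indicator_of_mem hv]
      exact tent_le R v
    · rw [tent_eq_zero (le_of_lt (by simpa using hv))]
      exact bot_le
  refine ne_top_of_le_ne_top ?_ (lintegral_mono h)
  rw [lintegral_indicator_const measurableSet_closedBall]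
  exact ENNReal.mul_ne_top ENNReal.ofReal_ne_top measure_closedBall_lt_top.ne

theorem lintegral_ballKernel_mul_le {δ : ℝ} (hδ : 0 < δ) {g : V → ℝ≥0∞} {M : ℝ≥0∞}
    (h : ∀ a, ‖a‖ ≤ δ → g a ≤ M) : ∫⁻ a, ballKernel δ a * g a ≤ M := by
  calc ∫⁻ a, ballKernel δ a * g a ≤ ∫⁻ a : V, ballKernel δ a * M := by
        refine lintegral_mono fun a => ?_
        rcases le_or_gt ‖a‖ δ with ha | ha
        · exact mul_le_mul_right (h a ha) _
        · simp [ballKernel_eq_zero ha]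
    _ = M := by
        rw [lintegral_mul_const _ (measurable_ballKernel δ), lintegral_ballKernel hδ, one_mul]

theorem le_lintegral_ballKernel_mul_add {δ : ℝ} (hδ : 0 < δ) {g : V → ℝ≥0∞} {M e : ℝ≥0∞}
    (h : ∀ a, ‖a‖ ≤ δ → M ≤ g a + e) : M ≤ (∫⁻ a, ballKernel δ a * g a) + e := by
  calc M = ∫⁻ a : V, ballKernel δ a * M := by
        rw [lintegral_mul_const _ (measurable_ballKernel δ), lintegral_ballKernel hδ, one_mul]
    _ ≤ ∫⁻ a, ballKernel δ a * g a + ballKernel δ a * e := by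
        refine lintegral_mono fun a => ?_
        rcases le_or_gt ‖a‖ δ with ha | ha
        · rw [← mul_add]
          exact mul_le_mul_right (h a ha) _
        · simp [ballKernel_eq_zero ha]
    _ = (∫⁻ a, ballKernel δ a * g a) + e := by
        rw [lintegral_add_right _ ((measurable_ballKernel δ).mul_const e),
          lintegral_mul_const _ (measurable_ballKernel δ), lintegral_ballKernel hδ, one_mul]

theorem tendsto_lintegral_ballKernel_mul_tent (R t : ℝ) (w : V) {ι : Type*} {l : Filter ι}
    {δ ε : ι → ℝ} (hδ0 : ∀ i, 0 < δ i) (hε0 : ∀ i, 0 < ε i)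
    (hδ : Filter.Tendsto δ l (nhds 0)) (hε : Filter.Tendsto ε l (nhds 0)) :
    Filter.Tendsto (fun i => ∫⁻ a, ballKernel (δ i) a *
        ∫⁻ b, ballKernel (ε i) b * tent R (t • (b - a + w))) l (nhds (tent R (t • w))) := by
  set e : ι → ℝ≥0∞ := fun i => ENNReal.ofReal (|t| * (δ i + ε i))
  have he : Filter.Tendsto e l (nhds 0) := by
    simpa only [add_zero, mul_zero, ENNReal.ofReal_zero] using
      ENNReal.tendsto_ofReal ((hδ.add hε).const_mul |t|)
  have hclose : ∀ i, ∀ a b : V, ‖a‖ ≤ δ i → ‖b‖ ≤ ε i →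
      ENNReal.ofReal ‖t • (b - a + w) - t • w‖ ≤ e i := fun i a b ha hb => by
    refine ENNReal.ofReal_le_ofReal ?_
    rw [← smul_sub, add_sub_cancel_right, norm_smul, Real.norm_eq_abs]
    gcongr
    linarith [norm_sub_le b a]
  have hlower : Filter.Tendsto (fun i => tent R (t • w) - e i) l (nhds (tent R (t • w))) := by
    simpa only [tsub_zero] using
      ENNReal.Tendsto.sub tendsto_const_nhds he
        (.inl (show tent R (t • w) ≠ ∞ from ENNReal.ofReal_ne_top))
  have hupper : Filter.Tendsto (fun i => tent R (t • w) + e i) l (nhds (tent R (t • w))) := by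
    simpa using tendsto_const_nhds.add he
  refine tendsto_of_tendsto_of_tendsto_of_le_of_le hlower hupper (fun i => ?_) fun i => ?_
  · refine tsub_le_iff_right.2 (le_lintegral_ballKernel_mul_add (hδ0 i) fun a ha =>
      le_lintegral_ballKernel_mul_add (hε0 i) fun b hb =>
        (tent_le_add R _ (t • (b - a + w))).trans ?_)
    rw [norm_sub_rev]
    exact add_le_add_right (hclose i a b ha hb) _
  · exact lintegral_ballKernel_mul_le (hδ0 i) fun a ha =>
      lintegral_ballKernel_mul_le (hε0 i) fun b hb =>
        (tent_le_add R _ _).trans (add_le_add_right (hclose i a b ha hb) _)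

@[fun_prop]
theorem measurable_slantCorrelation (R δ ε : ℝ) :
    Measurable (slantCorrelation R δ ε : ℝ × V → ℝ≥0∞) := by
  unfold slantCorrelation
  fun_prop

theorem lintegral_tent_mul_ballKernel_sub_slant (R ε : ℝ) {u : ℝ × V} (hu : u.1 ≠ 0) (a : V) :
    ∫⁻ v, tent R v * ballKernel ε (a - slant v u) =
      ENNReal.ofReal |(u.1 ^ Module.finrank ℝ V)⁻¹| *
        ∫⁻ b, ballKernel ε b * tent R (u.1⁻¹ • (b - a + u.2)) := by
  have hscale : ∀ f : V → ℝ≥0∞, Measurable f → ∫⁻ v, f (u.1 • v) =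
      ENNReal.ofReal |(u.1 ^ Module.finrank ℝ V)⁻¹| * ∫⁻ b, f b := fun f hf => by
    rw [← smul_eq_mul, ← lintegral_smul_measure, ← Measure.map_addHaar_smul volume hu,
      lintegral_map hf (measurable_const_smul _)]
  calc ∫⁻ v, tent R v * ballKernel ε (a - slant v u)
      = ∫⁻ v, ballKernel ε (u.1 • v + (a - u.2)) * tent R (u.1⁻¹ • u.1 • v) := by
        refine lintegral_congr fun v => ?_
        rw [inv_smul_smul₀ hu, mul_comm, slant, show a - (u.2 - u.1 • v) = u.1 • v + (a - u.2) by
          abel]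
    _ = ENNReal.ofReal |(u.1 ^ Module.finrank ℝ V)⁻¹| *
          ∫⁻ b, ballKernel ε (b + (a - u.2)) * tent R (u.1⁻¹ • b) :=
        hscale (fun b => ballKernel ε (b + (a - u.2)) * tent R (u.1⁻¹ • b)) (by fun_prop)
    _ = _ := by
        rw [← lintegral_sub_right_eq_self _ (a - u.2)]
        refine congrArg _ (lintegral_congr fun b => ?_)
        rw [sub_add_cancel, sub_sub_eq_add_sub, add_sub_right_comm]

theorem slantCorrelation_eq (R δ ε : ℝ) {u : ℝ × V} (hu : u.1 ≠ 0) :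
    slantCorrelation R δ ε u = ENNReal.ofReal |(u.1 ^ Module.finrank ℝ V)⁻¹| *
      ∫⁻ a, ballKernel δ a * ∫⁻ b, ballKernel ε b * tent R (u.1⁻¹ • (b - a + u.2)) := by
  calc slantCorrelation R δ ε u
      = ∫⁻ v, ∫⁻ a, ballKernel δ a * (tent R v * ballKernel ε (a - slant v u)) := by
        refine lintegral_congr fun v => ?_
        rw [← lintegral_const_mul _ (by fun_prop)]
        exact lintegral_congr fun a => mul_left_comm _ _ _
    _ = ∫⁻ a, ∫⁻ v, ballKernel δ a * (tent R v * ballKernel ε (a - slant v u)) :=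
        lintegral_lintegral_swap (by fun_prop)
    _ = ∫⁻ a, ENNReal.ofReal |(u.1 ^ Module.finrank ℝ V)⁻¹| * (ballKernel δ a *
          ∫⁻ b, ballKernel ε b * tent R (u.1⁻¹ • (b - a + u.2))) := by
        refine lintegral_congr fun a => ?_
        rw [lintegral_const_mul _ (by fun_prop), lintegral_tent_mul_ballKernel_sub_slant R ε hu,
          mul_left_comm]
    _ = _ := lintegral_const_mul _ (by fun_prop)

theorem tendsto_slantCorrelation (R : ℝ) {u : ℝ × V} (hu : u.1 ≠ 0) {ι : Type*}
    {l : Filter ι} {δ ε : ι → ℝ} (hδ0 : ∀ i, 0 < δ i) (hε0 : ∀ i, 0 < ε i)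
    (hδ : Filter.Tendsto δ l (nhds 0)) (hε : Filter.Tendsto ε l (nhds 0)) :
    Filter.Tendsto (fun i => slantCorrelation R (δ i) (ε i) u) l
      (nhds (limitCorrelation R u)) := by
  simp only [slantCorrelation_eq R _ _ hu]
  exact ENNReal.Tendsto.const_mul (tendsto_lintegral_ballKernel_mul_tent R _ _ hδ0 hε0 hδ hε)
    (.inr ENNReal.ofReal_ne_top)

-- Steep differences: the change of variables gives the factor `|u.1|⁻¹ ^ dim V`.
theorem slantCorrelation_le_of_norm_lt {R δ ε : ℝ} (hδ : 0 < δ) (hε : 0 < ε)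
    {u : ℝ × V} (hu : ‖u‖ < 2 * R * |u.1|) :
    slantCorrelation R δ ε u ≤ ENNReal.ofReal (2 * R) ^ Module.finrank ℝ V * ENNReal.ofReal R *
      (‖u‖ₑ ^ Module.finrank ℝ V)⁻¹ := by
  have hu1 : u.1 ≠ 0 := fun h => by simp [h, (norm_nonneg u).not_gt] at hu
  have hu0 : u ≠ 0 := fun h => hu1 (by simp [h])
  have hjacobian : ENNReal.ofReal |(u.1 ^ Module.finrank ℝ V)⁻¹| ≤
      ENNReal.ofReal (2 * R) ^ Module.finrank ℝ V * (‖u‖ₑ ^ Module.finrank ℝ V)⁻¹ := by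
    rw [← div_eq_mul_inv, ENNReal.le_div_iff_mul_le (by simp [hu0]) (by simp), ← ofReal_norm,
      abs_inv, abs_pow, ← inv_pow, ENNReal.ofReal_pow (by positivity), ← mul_pow,
      ← ENNReal.ofReal_mul (by positivity)]
    refine pow_le_pow_left' (ENNReal.ofReal_le_ofReal ?_) _
    rw [inv_mul_le_iff₀ (by positivity)]
    linarith
  have havg : ∫⁻ a, ballKernel δ a * ∫⁻ b, ballKernel ε b * tent R (u.1⁻¹ • (b - a + u.2)) ≤
      ENNReal.ofReal R :=
    lintegral_ballKernel_mul_le hδ fun a _ => lintegral_ballKernel_mul_le hε fun b _ => tent_le R _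
  rw [slantCorrelation_eq R _ _ hu1, mul_right_comm]
  exact mul_le_mul' hjacobian havg

theorem inv_volume_closedBall_le {ε : ℝ} (hε : 0 < ε) {r : ℝ≥0∞} (hr : r ≤ 4 * ENNReal.ofReal ε) :
    (volume (closedBall (0 : V) ε))⁻¹ ≤ 4 ^ Module.finrank ℝ V * (volume (ball (0 : V) 1))⁻¹ *
      (r ^ Module.finrank ℝ V)⁻¹ := by
  have hball : volume (ball (0 : V) 1) ≠ 0 := (measure_ball_pos _ _ one_pos).ne'
  have hscale : (ENNReal.ofReal ε ^ Module.finrank ℝ V)⁻¹ ≤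
      4 ^ Module.finrank ℝ V * (r ^ Module.finrank ℝ V)⁻¹ := by
    rw [ENNReal.inv_pow, ENNReal.inv_pow, ← mul_pow]
    refine pow_le_pow_left' ?_ _
    rw [← div_eq_mul_inv, ENNReal.le_div_iff_mul_le (.inr (by simp)) (.inr (by simp)), mul_comm,
      ← div_eq_mul_inv]
    exact ENNReal.div_le_of_le_mul hr
  rw [Measure.addHaar_closedBall _ _ hε.le, ENNReal.ofReal_pow hε.le,
    ENNReal.mul_inv (.inr measure_ball_lt_top.ne) (.inr hball), mul_right_comm]
  gcongr

-- Flat differences: the kernels only meet if one of the scales is comparable to `‖u‖`.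
theorem slantCorrelation_le_of_le_norm {R δ ε : ℝ} (hR : 1 ≤ R) (hδ : 0 < δ) (hε : 0 < ε)
    {u : ℝ × V} (hu : 2 * R * |u.1| ≤ ‖u‖) :
    slantCorrelation R δ ε u ≤ (∫⁻ v : V, tent R v) *
      (4 ^ Module.finrank ℝ V * (volume (ball (0 : V) 1))⁻¹) *
        (‖u‖ₑ ^ Module.finrank ℝ V)⁻¹ := by
  wlog hle : δ ≤ ε generalizing δ ε u
  · rw [← neg_neg u, slantCorrelation_neg, enorm_neg]
    exact this hε hδ (by simpa using hu) (le_of_not_ge hle)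
  rw [mul_assoc, ← lintegral_mul_const _ (measurable_tent R)]
  refine lintegral_mono fun v => ?_
  rcases le_or_gt R ‖v‖ with hv | hv
  · simp [tent_eq_zero hv]
  gcongr
  refine lintegral_ballKernel_mul_le hδ fun z hz => ?_
  rcases lt_or_ge ε ‖z - slant v u‖ with hz' | hz'
  · simp [ballKernel_eq_zero hz']
  have hslant : ‖slant v u‖ ≤ 2 * ε := by
    have := norm_sub_le z (z - slant v u)
    rw [sub_sub_cancel] at this
    linarith
  refine (ballKernel_le _ _).trans (inv_volume_closedBall_le hε ?_)
  rw [← ofReal_norm, ← ENNReal.ofReal_ofNat 4, ← ENNReal.ofReal_mul (by simp)]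
  exact ENNReal.ofReal_le_ofReal (norm_le_of_norm_slant_le hR hu hv.le hslant)

theorem exists_slantCorrelation_le {R : ℝ} (hR : 1 ≤ R) :
    ∃ C : ℝ≥0∞, C ≠ ∞ ∧ ∀ (δ ε : ℝ) (u : ℝ × V), 0 < δ → 0 < ε →
      slantCorrelation R δ ε u ≤ C * (‖u‖ₑ ^ Module.finrank ℝ V)⁻¹ := by
  have hball : volume (ball (0 : V) 1) ≠ 0 := (measure_ball_pos _ _ one_pos).ne'
  refine ⟨ENNReal.ofReal (2 * R) ^ Module.finrank ℝ V * ENNReal.ofReal R + (∫⁻ v : V, tent R v) *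
    (4 ^ Module.finrank ℝ V * (volume (ball (0 : V) 1))⁻¹), ?_, fun δ ε u hδ hε => ?_⟩
  · finiteness [lintegral_tent_ne_top (V := V) R]
  · rcases lt_or_ge ‖u‖ (2 * R * |u.1|) with hu | hu
    · exact (slantCorrelation_le_of_norm_lt hδ hε hu).trans
        (by gcongr; exact le_self_add)
    · exact (slantCorrelation_le_of_le_norm hR hδ hε hu).trans (by gcongr; exact le_add_self)

end SlantCorrelation

theorem exists_isCompact_lintegral_inv_edist_pow_le {V : Type*}
    [NormedAddCommGroup V] [NormedSpace ℝ V] [FiniteDimensional ℝ V] [MeasurableSpace V]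
    [BorelSpace V] {A : Set (ℝ × V)} (hA : AnalyticSet A)
    (hdA : (Module.finrank ℝ V : ℝ≥0∞) < dimH A) :
    ∃ K ⊆ A, IsCompact K ∧ ∃ μ : Measure (ℝ × V), IsProbabilityMeasure μ ∧ μ Kᶜ = 0 ∧
      (∃ M ≠ ∞, ∀ y, ∫⁻ x, (edist x y ^ Module.finrank ℝ V)⁻¹ ∂μ ≤ M) ∧
      ∀ c, μ {x | x.1 = c} = 0 := by
  obtain ⟨t, hVt, htA⟩ := ENNReal.lt_iff_exists_nnreal_btwn.1 hdA
  have hVt' : (Module.finrank ℝ V : ℝ) < t := mod_cast hVt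
  obtain ⟨K, hKA, hK, μ, _, hμK, hμ⟩ := exists_isFrostman hA (pos_of_gt (by exact_mod_cast hVt)) htA
  obtain ⟨M, hM, hμM⟩ := hμ.exists_lintegral_edist_rpow_neg_le (Nat.cast_nonneg _) hVt'
  refine ⟨K, hKA, hK, μ, inferInstance, hμK, ⟨M, hM, fun y => ?_⟩, fun c => ?_⟩
  · simpa only [ENNReal.rpow_neg, ENNReal.rpow_natCast] using hμM y
  · refine hμ.measure_eq_zero_of_dimH_lt (lt_of_le_of_lt ?_ hVt)
    have hrange : {x : ℝ × V | x.1 = c} = range (Prod.mk c) := by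
      ext ⟨a, v⟩
      simp [eq_comm]
    rw [hrange, ← Real.dimH_univ_eq_finrank V]
    exact (LipschitzWith.prodMk_left c).dimH_range_le

theorem ae_prod_fst_sub_ne_zero {V : Type*} [AddGroup V] [MeasurableSpace V]
    (μ ν : Measure (ℝ × V)) [SFinite ν]
    (hν : ∀ c, ν {x | x.1 = c} = 0) : ∀ᵐ q ∂μ.prod ν, (q.1 - q.2).1 ≠ 0 := by
  have hmeas : MeasurableSet {q : (ℝ × V) × (ℝ × V) | (q.1 - q.2).1 = 0} :=
    (measurableSet_singleton (0 : ℝ)).preimage (by fun_prop)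
  refine (ae_iff).2 ?_
  simp only [not_not]
  rw [Measure.measure_prod_null hmeas]
  refine .of_forall fun x => measure_mono_null (fun y hy => ?_) (hν x.1)
  exact (sub_eq_zero.1 hy).symm

section SmoothedDensity

variable {V : Type*} [NormedAddCommGroup V] [NormedSpace ℝ V]

/-- The pairs `(v, z)` with `‖v‖ ≤ R` and `z` within `δ` of the slanted projection of `K`. -/
def slantNhd (K : Set (ℝ × V)) (R δ : ℝ) : Set (V × V) :=
  {p | ‖p.1‖ ≤ R ∧ ∃ x ∈ K, ‖slant p.1 x - p.2‖ ≤ δ}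

theorem slantNhd_mono {K : Set (ℝ × V)} {R : ℝ} : Monotone (slantNhd K R) :=
  fun _ _ h _ ⟨hv, x, hx, hxδ⟩ => ⟨hv, x, hx, hxδ.trans h⟩

theorem isCompact_slantNhd [FiniteDimensional ℝ V] {K : Set (ℝ × V)} (hK : IsCompact K) (R δ : ℝ) :
    IsCompact (slantNhd K R δ) := by
  have himage : slantNhd K R δ = (fun q : V × (ℝ × V) × V => (q.1, slant q.1 q.2.1 - q.2.2)) ''
      (closedBall 0 R ×ˢ K ×ˢ closedBall 0 δ) := by
    ext ⟨v, z⟩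
    constructor
    · rintro ⟨hv, x, hx, hxδ⟩
      exact ⟨(v, x, slant v x - z), ⟨by simpa using hv, hx, by simpa using hxδ⟩, by simp⟩
    · rintro ⟨⟨w, x, a⟩, ⟨hw, hx, ha⟩, h⟩
      obtain ⟨rfl, rfl⟩ := Prod.mk.inj h
      exact ⟨by simpa using hw, x, hx, by simpa using ha⟩
  rw [himage]
  refine ((isCompact_closedBall _ _).prod (hK.prod (isCompact_closedBall _ _))).image ?_
  unfold slant
  fun_prop

theorem mem_slant_image_of_forall_mem_slantNhd {K : Set (ℝ × V)} (hK : IsCompact K) {R : ℝ}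
    {ι : Type*} {l : Filter ι} [l.NeBot] {δ : ι → ℝ} (hδ : Filter.Tendsto δ l (nhds 0))
    {p : V × V} (hp : ∀ j, p ∈ slantNhd K R (δ j)) : p.2 ∈ slant p.1 '' K := by
  have hclosed : IsClosed (slant p.1 '' K) :=
    (hK.image (continuous_slant.comp (Continuous.prodMk_right p.1))).isClosed
  rw [← hclosed.closure_eq, Metric.mem_closure_iff]
  intro ε hε
  obtain ⟨j, hj⟩ := (hδ.eventually (gt_mem_nhds hε)).exists
  obtain ⟨-, x, hx, hxδ⟩ := hp j
  exact ⟨_, mem_image_of_mem _ hx, by rw [dist_comm, dist_eq_norm]; exact hxδ.trans_lt hj⟩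

variable [MeasureSpace V]

/-- The density at `p.2`, smoothed at scale `δ`, of the image of `μ` under `slant p.1`. -/
noncomputable def smoothedDensity (μ : Measure (ℝ × V)) (δ : ℝ) (p : V × V) : ℝ≥0∞ :=
  ∫⁻ x, ballKernel δ (slant p.1 x - p.2) ∂μ

theorem smoothedDensity_le (μ : Measure (ℝ × V)) [IsProbabilityMeasure μ] (δ : ℝ) (p : V × V) :
    smoothedDensity μ δ p ≤ (volume (closedBall (0 : V) δ))⁻¹ :=
  (lintegral_mono fun _ => ballKernel_le δ _).trans (by simp)

theorem smoothedDensity_eq_zero {μ : Measure (ℝ × V)} {K : Set (ℝ × V)} (hμ : μ Kᶜ = 0)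
    {R δ : ℝ} {p : V × V} (hp : ‖p.1‖ ≤ R) (h : p ∉ slantNhd K R δ) :
    smoothedDensity μ δ p = 0 := by
  rw [smoothedDensity, ← lintegral_zero (μ := μ)]
  refine lintegral_congr_ae ?_
  filter_upwards [compl_mem_ae_iff.2 hμ] with x hx
  refine ballKernel_eq_zero (lt_of_not_ge fun hle => h ⟨hp, x, not_not.1 hx, hle⟩)

variable [BorelSpace V] [FiniteDimensional ℝ V]

theorem measurable_smoothedDensity (μ : Measure (ℝ × V)) [SFinite μ] (δ : ℝ) :
    Measurable (smoothedDensity μ δ) := by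
  unfold smoothedDensity
  fun_prop

theorem exists_lintegral_limitCorrelation_ne_zero (μ ν : Measure (ℝ × V)) [IsProbabilityMeasure μ]
    [IsProbabilityMeasure ν] (hν : ∀ c, ν {x | x.1 = c} = 0) :
    ∃ R : ℝ, 1 ≤ R ∧ ∫⁻ q, limitCorrelation R (q.1 - q.2) ∂μ.prod ν ≠ 0 := by
  by_contra! hzero
  have hmeas : ∀ R, Measurable fun q : (ℝ × V) × (ℝ × V) => limitCorrelation R (q.1 - q.2) :=
    fun R => by
      unfold limitCorrelation
      fun_prop
  have hall : ∀ᵐ q ∂μ.prod ν, ∀ k : ℕ, limitCorrelation (k + 1 : ℝ) (q.1 - q.2) = 0 :=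
    ae_all_iff.2 fun k => (lintegral_eq_zero_iff (hmeas _)).1 (hzero _ (by simp))
  obtain ⟨q, hq0, hq⟩ := ((ae_prod_fst_sub_ne_zero μ ν hν).and hall).exists
  obtain ⟨k, hk⟩ := exists_nat_gt ‖(q.1 - q.2).1⁻¹ • (q.1 - q.2).2‖
  rcases mul_eq_zero.1 (hq k) with h | h
  · have := ENNReal.ofReal_eq_zero.1 h
    have : 0 < |((q.1 - q.2).1 ^ Module.finrank ℝ V)⁻¹| := by positivity
    linarith
  · have := ENNReal.ofReal_eq_zero.1 h
    linarith

variable [(volume : Measure V).IsAddHaarMeasure]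

theorem lintegral_smoothedDensity_mul (μ ν : Measure (ℝ × V)) [SFinite μ] [SFinite ν]
    (R δ ε : ℝ) :
    ∫⁻ p, smoothedDensity μ δ p * smoothedDensity ν ε p ∂tentMeasure V R =
      ∫⁻ q, slantCorrelation R δ ε (q.1 - q.2) ∂μ.prod ν := by
  have hkernel : ∀ (δ : ℝ) (p : V × V), Measurable fun x => ballKernel δ (slant p.1 x - p.2) :=
    fun δ p => by fun_prop
  have hmul : Measurable fun p => smoothedDensity μ δ p * smoothedDensity ν ε p :=
    (measurable_smoothedDensity μ δ).mul (measurable_smoothedDensity ν ε)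
  rw [tentMeasure, lintegral_withDensity_eq_lintegral_mul _ (by fun_prop) hmul]
  calc ∫⁻ p : V × V, tent R p.1 * (smoothedDensity μ δ p * smoothedDensity ν ε p)
      = ∫⁻ p : V × V, ∫⁻ q, tent R p.1 *
          (ballKernel δ (slant p.1 q.1 - p.2) * ballKernel ε (slant p.1 q.2 - p.2)) ∂μ.prod ν := by
        refine lintegral_congr fun p => ?_
        rw [lintegral_const_mul _ (by fun_prop), smoothedDensity, smoothedDensity,
          lintegral_prod_mul (hkernel δ p).aemeasurable (hkernel ε p).aemeasurable]
    _ = ∫⁻ q, (∫⁻ p : V × V, tent R p.1 *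
          (ballKernel δ (slant p.1 q.1 - p.2) * ballKernel ε (slant p.1 q.2 - p.2))) ∂μ.prod ν :=
        lintegral_lintegral_swap (by fun_prop)
    _ = ∫⁻ q, slantCorrelation R δ ε (q.1 - q.2) ∂μ.prod ν := by
        refine lintegral_congr fun q => ?_
        rw [Measure.volume_eq_prod, lintegral_prod _ (by fun_prop), slantCorrelation]
        refine lintegral_congr fun v => ?_
        dsimp only
        rw [lintegral_const_mul _ (by fun_prop), ← lintegral_sub_left_eq_self _ (slant v q.1)]
        simp only [slant_sub, sub_sub_cancel]
        congr 1
        refine lintegral_congr fun z => ?_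
        congr 2
        abel

theorem tendsto_lintegral_smoothedDensity_mul (μ ν : Measure (ℝ × V))
    [IsProbabilityMeasure μ] [IsProbabilityMeasure ν] {M : ℝ≥0∞} (hM : M ≠ ∞)
    (hμ : ∀ y, ∫⁻ x, (edist x y ^ Module.finrank ℝ V)⁻¹ ∂μ ≤ M)
    (hν : ∀ c, ν {x | x.1 = c} = 0) {R : ℝ} (hR : 1 ≤ R) {ι : Type*} {l : Filter ι}
    [l.IsCountablyGenerated] [l.NeBot] {δ ε : ι → ℝ} (hδ0 : ∀ i, 0 < δ i) (hε0 : ∀ i, 0 < ε i)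
    (hδ : Filter.Tendsto δ l (nhds 0)) (hε : Filter.Tendsto ε l (nhds 0)) :
    ∫⁻ q, limitCorrelation R (q.1 - q.2) ∂μ.prod ν ≠ ∞ ∧
    Filter.Tendsto
      (fun i => ∫⁻ p, smoothedDensity μ (δ i) p * smoothedDensity ν (ε i) p ∂tentMeasure V R) l
      (nhds (∫⁻ q, limitCorrelation R (q.1 - q.2) ∂μ.prod ν)) := by
  obtain ⟨C, hC, hbound⟩ := exists_slantCorrelation_le (V := V) hR
  have hfin : ∫⁻ q, C * (‖q.1 - q.2‖ₑ ^ Module.finrank ℝ V)⁻¹ ∂μ.prod ν ≠ ∞ := by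
    rw [lintegral_const_mul _ (by fun_prop), lintegral_prod_symm _ (by fun_prop)]
    refine ENNReal.mul_ne_top hC (ne_top_of_le_ne_top hM ?_)
    calc ∫⁻ y, ∫⁻ x, (‖x - y‖ₑ ^ Module.finrank ℝ V)⁻¹ ∂μ ∂ν ≤ ∫⁻ _, M ∂ν :=
          lintegral_mono fun y => by simpa only [edist_eq_enorm_sub] using hμ y
      _ = M := by simp
  have hlim := tendsto_lintegral_filter_of_dominated_convergence (μ := μ.prod ν) (l := l)
    (F := fun i q => slantCorrelation R (δ i) (ε i) (q.1 - q.2))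
    (f := fun q => limitCorrelation R (q.1 - q.2))
    (fun q => C * (‖q.1 - q.2‖ₑ ^ Module.finrank ℝ V)⁻¹)
    (.of_forall fun i => by fun_prop)
    (.of_forall fun i => .of_forall fun q => hbound _ _ _ (hδ0 i) (hε0 i)) hfin
    ((ae_prod_fst_sub_ne_zero μ ν hν).mono fun q hq =>
      tendsto_slantCorrelation R hq hδ0 hε0 hδ hε)
  simp only [lintegral_smoothedDensity_mul]
  exact ⟨ne_top_of_le_ne_top hfin (le_of_tendsto' hlim fun i => lintegral_mono fun q =>
    hbound _ _ _ (hδ0 i) (hε0 i)), hlim⟩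

theorem not_tendsto_tentMeasure_slantNhd_inter {μ ν : Measure (ℝ × V)}
    [IsProbabilityMeasure μ] [IsProbabilityMeasure ν] {K L : Set (ℝ × V)}
    (hK : IsCompact K) (hL : IsCompact L) (hμK : μ Kᶜ = 0) (hνL : ν Lᶜ = 0)
    {M : ℝ≥0∞} (hM : M ≠ ∞) (hμ : ∀ y, ∫⁻ x, (edist x y ^ Module.finrank ℝ V)⁻¹ ∂μ ≤ M)
    (hν : ∀ y, ∫⁻ x, (edist x y ^ Module.finrank ℝ V)⁻¹ ∂ν ≤ M)
    (hμ0 : ∀ c, μ {x | x.1 = c} = 0) (hν0 : ∀ c, ν {x | x.1 = c} = 0) {R : ℝ} (hR : 1 ≤ R)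
    (hJ : ∫⁻ q, limitCorrelation R (q.1 - q.2) ∂μ.prod ν ≠ 0)
    {ι : Type*} {l : Filter ι} [l.IsCountablyGenerated] [l.NeBot] {δ : ι → ℝ}
    (hδ0 : ∀ j, 0 < δ j) (hδ : Filter.Tendsto δ l (nhds 0)) :
    ¬Filter.Tendsto (fun j => tentMeasure V R (slantNhd K R (δ j) ∩ slantNhd L R (δ j))) l
      (nhds 0) := by
  have hδ₁ : Filter.Tendsto (fun p : ι × ι => δ p.1) (l ×ˢ l) (nhds 0) :=
    hδ.comp Filter.tendsto_fst
  have hδ₂ : Filter.Tendsto (fun p : ι × ι => δ p.2) (l ×ˢ l) (nhds 0) :=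
    hδ.comp Filter.tendsto_snd
  obtain ⟨hJμ, hμlim⟩ := tendsto_lintegral_smoothedDensity_mul μ μ hM hμ hμ0 hR
    (fun _ => hδ0 _) (fun _ => hδ0 _) hδ₁ hδ₂
  obtain ⟨hJν, hνlim⟩ := tendsto_lintegral_smoothedDensity_mul ν ν hM hν hν0 hR
    (fun _ => hδ0 _) (fun _ => hδ0 _) hδ₁ hδ₂
  obtain ⟨-, hlim⟩ := tendsto_lintegral_smoothedDensity_mul μ ν hM hμ hν0 hR hδ0 hδ0 hδ hδ
  refine not_tendsto_measure_zero_of_tendsto_correlation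
    (fun j => measurable_smoothedDensity μ (δ j)) (fun j => measurable_smoothedDensity ν (δ j))
    (fun j => ENNReal.inv_ne_top.2 (measure_closedBall_pos _ _ (hδ0 j)).ne')
    (fun j => smoothedDensity_le μ (δ j)) (fun j => smoothedDensity_le ν (δ j)) hJμ hJν hJ
    hμlim hνlim hlim
    (fun j => ((isCompact_slantNhd hK _ _).inter (isCompact_slantNhd hL _ _)).measurableSet)
    fun j => ?_
  filter_upwards [ae_tentMeasure_norm_fst_le R] with p hp hpN
  by_cases hpK : p ∈ slantNhd K R (δ j)
  · rw [smoothedDensity_eq_zero hνL hp fun hpL => hpN ⟨hpK, hpL⟩, mul_zero]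
  · rw [smoothedDensity_eq_zero hμK hp hpK, zero_mul]

theorem tentMeasure_iInter_slantNhd_eq_zero {K L : Set (ℝ × V)} (hK : IsCompact K)
    (hL : IsCompact L) (R : ℝ) {δ : ℕ → ℝ} (hδ : Filter.Tendsto δ Filter.atTop (nhds 0))
    (h : volume {v : V | 0 < volume (slant v '' K ∩ slant v '' L)} = 0) :
    tentMeasure V R (⋂ j, slantNhd K R (δ j) ∩ slantNhd L R (δ j)) = 0 := by
  refine withDensity_absolutelyContinuous _ _ ?_
  rw [Measure.volume_eq_prod, Measure.measure_prod_null (.iInter fun j =>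
    ((isCompact_slantNhd hK _ _).inter (isCompact_slantNhd hL _ _)).measurableSet)]
  filter_upwards [compl_mem_ae_iff.2 h] with v hv
  refine measure_mono_null (fun z hz => ?_) (nonpos_iff_eq_zero.1 (not_lt.1 hv))
  have hz := mem_iInter.1 hz
  exact ⟨mem_slant_image_of_forall_mem_slantNhd (p := (v, z)) hK hδ fun j => (hz j).1,
    mem_slant_image_of_forall_mem_slantNhd (p := (v, z)) hL hδ fun j => (hz j).2⟩

theorem volume_setOf_volume_slant_image_inter_pos {μ ν : Measure (ℝ × V)}
    [IsProbabilityMeasure μ] [IsProbabilityMeasure ν] {K L : Set (ℝ × V)}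
    (hK : IsCompact K) (hL : IsCompact L) (hμK : μ Kᶜ = 0) (hνL : ν Lᶜ = 0)
    {M : ℝ≥0∞} (hM : M ≠ ∞) (hμ : ∀ y, ∫⁻ x, (edist x y ^ Module.finrank ℝ V)⁻¹ ∂μ ≤ M)
    (hν : ∀ y, ∫⁻ x, (edist x y ^ Module.finrank ℝ V)⁻¹ ∂ν ≤ M)
    (hμ0 : ∀ c, μ {x | x.1 = c} = 0) (hν0 : ∀ c, ν {x | x.1 = c} = 0) :
    0 < volume {v : V | 0 < volume (slant v '' K ∩ slant v '' L)} := by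
  obtain ⟨R, hR, hJ⟩ := exists_lintegral_limitCorrelation_ne_zero μ ν hν0
  obtain ⟨δ, hδanti, hδ0, hδ⟩ := exists_seq_strictAnti_tendsto (0 : ℝ)
  have hcompact : ∀ j, IsCompact (slantNhd K R (δ j) ∩ slantNhd L R (δ j)) := fun j =>
    (isCompact_slantNhd hK _ _).inter (isCompact_slantNhd hL _ _)
  have hfin : tentMeasure V R (slantNhd K R (δ 0) ∩ slantNhd L R (δ 0)) ≠ ∞ :=
    ne_top_of_le_ne_top (ENNReal.mul_ne_top ENNReal.ofReal_ne_top (hcompact 0).measure_ne_top)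
      (tentMeasure_le R _)
  have hlim := tendsto_measure_iInter_atTop (μ := tentMeasure V R)
    (fun j => (hcompact j).measurableSet.nullMeasurableSet)
    (fun i j hij => inter_subset_inter (slantNhd_mono (hδanti.antitone hij))
      (slantNhd_mono (hδanti.antitone hij))) ⟨0, hfin⟩
  rw [pos_iff_ne_zero]
  intro hnull
  rw [tentMeasure_iInter_slantNhd_eq_zero hK hL R hδ hnull] at hlim
  exact not_tendsto_tentMeasure_slantNhd_inter hK hL hμK hνL hM hμ hν hμ0 hν0 hR hJ hδ0 hδ hlim

theorem volume_setOf_volume_slant_image_inter_pos_of_lt_dimH {A B : Set (ℝ × V)}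
    (hA : AnalyticSet A) (hB : AnalyticSet B) (hdA : (Module.finrank ℝ V : ℝ≥0∞) < dimH A)
    (hdB : (Module.finrank ℝ V : ℝ≥0∞) < dimH B) :
    0 < volume {v : V | 0 < volume (slant v '' A ∩ slant v '' B)} := by
  obtain ⟨K, hKA, hK, μ, _, hμK, ⟨M, hM, hμM⟩, hμ0⟩ :=
    exists_isCompact_lintegral_inv_edist_pow_le hA hdA
  obtain ⟨L, hLB, hL, ν, _, hνL, ⟨M', hM', hνM⟩, hν0⟩ :=
    exists_isCompact_lintegral_inv_edist_pow_le hB hdB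
  refine (volume_setOf_volume_slant_image_inter_pos hK hL hμK hνL (max_lt hM.lt_top hM'.lt_top).ne
    (fun y => (hμM y).trans (le_max_left _ _)) (fun y => (hνM y).trans (le_max_right _ _))
    hμ0 hν0).trans_le (measure_mono fun v hv => ?_)
  exact lt_of_lt_of_le hv (measure_mono (inter_subset_inter (image_mono hKA) (image_mono hLB)))

end SmoothedDensity

theorem hausdorffMeasure_image_eq_zero_of_locallyLipschitzOn {X Y : Type*} [EMetricSpace X]
    [MeasurableSpace X] [BorelSpace X] [SecondCountableTopology X] [EMetricSpace Y]
    [MeasurableSpace Y] [BorelSpace Y] {f : X → Y} {s : Set X} (hf : LocallyLipschitzOn s f)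
    {r : ℝ} (hr : 0 ≤ r) (hs : μH[r] s = 0) : μH[r] (f '' s) = 0 := by
  choose! C t ht hC using show ∀ x ∈ s, ∃ C, ∃ t ∈ nhdsWithin x s, LipschitzOnWith C f t from hf
  obtain ⟨u, hus, hu, hcover⟩ := TopologicalSpace.countable_cover_nhdsWithin ht
  have himage : f '' s ⊆ ⋃ x ∈ u, f '' (t x ∩ s) := by
    rintro _ ⟨y, hy, rfl⟩
    obtain ⟨x, hx, hyx⟩ := mem_iUnion₂.1 (hcover hy)
    exact mem_iUnion₂.2 ⟨x, hx, mem_image_of_mem f ⟨hyx, hy⟩⟩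
  refine measure_mono_null himage ((measure_biUnion_null_iff hu).2 fun x hx => ?_)
  refine le_antisymm ?_ bot_le
  calc μH[r] (f '' (t x ∩ s)) ≤ (C x : ℝ≥0∞) ^ r * μH[r] (t x ∩ s) :=
        ((hC x (hus hx)).mono inter_subset_left).hausdorffMeasure_image_le hr
    _ = 0 := by rw [measure_mono_null inter_subset_right hs, mul_zero]

section UnitDirection

variable {E V : Type*} [NormedAddCommGroup E] [InnerProductSpace ℝ E]
  [NormedAddCommGroup V] [NormedSpace ℝ V]

theorem sub_inner_smul_eq_of_sub_eq_smul {e : E} (he : ‖e‖ = 1) {x y : E} {a : ℝ}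
    (h : x - y = a • e) : x - ⟪x, e⟫ • e = y - ⟪y, e⟫ • e := by
  have hinner : ⟪x, e⟫ - ⟪y, e⟫ = a := by
    rw [← inner_sub_left, h, real_inner_smul_left, real_inner_self_eq_norm_sq, he, one_pow, mul_one]
  rw [← sub_eq_zero, sub_sub_sub_comm, ← sub_smul, hinner, h, sub_self]

theorem locallyLipschitzOn_inv_fst_smul_snd (Φ : E ≃L[ℝ] ℝ × V) :
    LocallyLipschitzOn {e | (Φ e).1 ≠ 0} fun e => (Φ e).1⁻¹ • (Φ e).2 := by
  intro e he
  have hsmooth : ContDiffAt ℝ 1 (fun e => (Φ e).1⁻¹ • (Φ e).2) e :=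
    (Φ.contDiff.fst.contDiffAt.inv he).smul Φ.contDiff.snd.contDiffAt
  obtain ⟨K, t, ht, hK⟩ := hsmooth.exists_lipschitzOnWith
  exact ⟨K, t, mem_nhdsWithin_of_mem_nhds ht, hK⟩

/-- The unit vector which the coordinates `Φ` send to a positive multiple of `(1, v)`; the
projections along it correspond to `slant v`. -/
noncomputable def unitDirection (Φ : E ≃L[ℝ] ℝ × V) (v : V) : E :=
  ‖Φ.symm (1, v)‖⁻¹ • Φ.symm (1, v)

variable (Φ : E ≃L[ℝ] ℝ × V) (v : V)

theorem norm_symm_one_prod_pos : 0 < ‖Φ.symm (1, v)‖ := by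
  simp [norm_pos_iff]

theorem norm_unitDirection : ‖unitDirection Φ v‖ = 1 :=
  norm_smul_inv_norm (𝕜 := ℝ) (norm_pos_iff.1 (norm_symm_one_prod_pos Φ v))

theorem apply_unitDirection : Φ (unitDirection Φ v) = ‖Φ.symm (1, v)‖⁻¹ • (1, v) := by
  rw [unitDirection, map_smul, Φ.apply_symm_apply]

theorem inv_fst_smul_snd_unitDirection :
    (Φ (unitDirection Φ v)).1⁻¹ • (Φ (unitDirection Φ v)).2 = v := by
  have := norm_symm_one_prod_pos Φ v
  simp [apply_unitDirection, this.ne']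

theorem slant_apply_sub_inner_smul (x : E) :
    slant v (Φ (x - ⟪x, unitDirection Φ v⟫ • unitDirection Φ v)) = slant v (Φ x) := by
  simp only [map_sub, map_smul, slant_sub, apply_unitDirection]
  simp [slant, smul_smul]

theorem sub_inner_smul_eq_of_slant_apply_eq {x y : E} (h : slant v (Φ x) = slant v (Φ y)) :
    x - ⟪x, unitDirection Φ v⟫ • unitDirection Φ v =
      y - ⟪y, unitDirection Φ v⟫ • unitDirection Φ v := by
  refine sub_inner_smul_eq_of_sub_eq_smul (norm_unitDirection Φ v)
    (a := (Φ (x - y)).1 * ‖Φ.symm (1, v)‖) (Φ.injective ?_)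
  have hslant : slant v (Φ (x - y)) = 0 := by rw [map_sub, slant_sub, h, sub_self]
  rw [map_smul, apply_unitDirection, smul_smul,
    mul_inv_cancel_right₀ (norm_symm_one_prod_pos Φ v).ne']
  ext
  · simp
  · simpa using sub_eq_zero.1 hslant

theorem exists_lipschitzWith_slant_apply : ∃ C, LipschitzWith C fun x => slant v (Φ x) :=
  ⟨_, ((ContinuousLinearMap.snd ℝ ℝ V - (ContinuousLinearMap.fst ℝ ℝ V).smulRight v) ∘L
    Φ.toContinuousLinearMap).lipschitz⟩

variable [MeasurableSpace E] [BorelSpace E] [MeasurableSpace V] [BorelSpace V]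

theorem hausdorffMeasure_proj_inter_pos_of_slant {A B : Set E} {r : ℝ} (hr : 0 ≤ r)
    (h : 0 < μH[r] (slant v '' (Φ '' A) ∩ slant v '' (Φ '' B))) :
    0 < μH[r] ((fun x => x - ⟪x, unitDirection Φ v⟫ • unitDirection Φ v) '' A ∩
      (fun x => x - ⟪x, unitDirection Φ v⟫ • unitDirection Φ v) '' B) := by
  obtain ⟨C, hC⟩ := exists_lipschitzWith_slant_apply Φ v
  have hsub : slant v '' (Φ '' A) ∩ slant v '' (Φ '' B) ⊆ (fun x => slant v (Φ x)) ''
      ((fun x => x - ⟪x, unitDirection Φ v⟫ • unitDirection Φ v) '' A ∩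
        (fun x => x - ⟪x, unitDirection Φ v⟫ • unitDirection Φ v) '' B) := by
    rintro _ ⟨⟨_, ⟨a, ha, rfl⟩, rfl⟩, ⟨_, ⟨b, hb, rfl⟩, hab⟩⟩
    exact ⟨_, ⟨⟨a, ha, rfl⟩, ⟨b, hb, sub_inner_smul_eq_of_slant_apply_eq Φ v hab⟩⟩,
      slant_apply_sub_inner_smul Φ v a⟩
  contrapose! h
  calc _ ≤ _ := measure_mono hsub
    _ ≤ _ := hC.hausdorffMeasure_image_le hr _
    _ ≤ 0 := by rw [nonpos_iff_eq_zero.1 h, mul_zero]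

theorem hausdorffMeasure_pos_of_unitDirection_mem [FiniteDimensional ℝ E] {S : Set E} {r : ℝ}
    (hr : 0 ≤ r) (h : 0 < μH[r] {v | unitDirection Φ v ∈ S}) : 0 < μH[r] S := by
  contrapose! h
  have hnull : μH[r] (S ∩ {e | (Φ e).1 ≠ 0}) = 0 :=
    measure_mono_null inter_subset_left (nonpos_iff_eq_zero.1 h)
  refine (measure_mono_null (fun v hv => ?_) (hausdorffMeasure_image_eq_zero_of_locallyLipschitzOn
    ((locallyLipschitzOn_inv_fst_smul_snd Φ).mono inter_subset_right) hr hnull)).le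
  refine ⟨unitDirection Φ v, ⟨hv, ?_⟩, inv_fst_smul_snd_unitDirection Φ v⟩
  have := norm_symm_one_prod_pos Φ v
  simp [apply_unitDirection, this.ne']

end UnitDirection

theorem stmt_1_general {E : Type*} [NormedAddCommGroup E] [InnerProductSpace ℝ E]
    [FiniteDimensional ℝ E] [MeasurableSpace E] [BorelSpace E] {d : ℕ}
    (hE : Module.finrank ℝ E = d + 1) {A B : Set E} (hA : AnalyticSet A) (hB : AnalyticSet B)
    (hdA : (d : ℝ≥0∞) < dimH A) (hdB : (d : ℝ≥0∞) < dimH B) :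
    0 < μH[(d : ℝ)] {e : E | ‖e‖ = 1 ∧
      0 < μH[(d : ℝ)] ((fun x => x - ⟪x, e⟫ • e) '' A ∩ (fun x => x - ⟪x, e⟫ • e) '' B)} := by
  have hvolume : (volume : Measure (Fin d → ℝ)) = μH[(d : ℝ)] := by
    simpa only [Fintype.card_fin] using (hausdorffMeasure_pi_real (ι := Fin d)).symm
  have Φ : E ≃L[ℝ] ℝ × (Fin d → ℝ) :=
    ContinuousLinearEquiv.ofFinrankEq (by simp [hE, add_comm])
  have hpos : 0 < volume {v | 0 < volume (slant v '' (Φ '' A) ∩ slant v '' (Φ '' B))} :=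
    volume_setOf_volume_slant_image_inter_pos_of_lt_dimH (hA.image_of_continuous Φ.continuous)
      (hB.image_of_continuous Φ.continuous)
      (by rwa [Φ.dimH_image, Module.finrank_fin_fun])
      (by rwa [Φ.dimH_image, Module.finrank_fin_fun])
  rw [hvolume] at hpos
  exact hausdorffMeasure_pos_of_unitDirection_mem Φ (Nat.cast_nonneg d)
    (hpos.trans_le (measure_mono fun v hv => ⟨norm_unitDirection Φ v,
      hausdorffMeasure_proj_inter_pos_of_slant Φ v (Nat.cast_nonneg d) hv⟩))

theorem stmt_1 (n : ℕ) (hn : 2 ≤ n)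
    (A B : Set (EuclideanSpace ℝ (Fin n)))
    (hA : MeasurableSet A) (hB : MeasurableSet B)
    (hdA : (n : ℝ≥0∞) - 1 < dimH A) (hdB : (n : ℝ≥0∞) - 1 < dimH B) :
    0 < μH[(n : ℝ) - 1]
      {e : EuclideanSpace ℝ (Fin n) | ‖e‖ = 1 ∧
        0 < μH[(n : ℝ) - 1]
          ((fun x => x - ⟪x, e⟫ • e) '' A ∩ (fun x => x - ⟪x, e⟫ • e) '' B)} := by
  obtain ⟨d, rfl⟩ : ∃ d, n = d + 1 := ⟨n - 1, by omega⟩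
  have hreal : ((d + 1 : ℕ) : ℝ) - 1 = d := by simp
  have hennreal : ((d + 1 : ℕ) : ℝ≥0∞) - 1 = d := by
    rw [Nat.cast_add, Nat.cast_one, ENNReal.add_sub_cancel_right ENNReal.one_ne_top]
  rw [hennreal] at hdA hdB
  rw [hreal]
  exact stmt_1_general finrank_euclideanSpace_fin hA.analyticSet hB.analyticSet hdA hdB
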